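/- Let G be a finite simple graph with 11 vertices and 20 edges whose maximum degree equals 4. Then G is 2-apex. -/

import Mathlib

/-- `H` is a minor of `G`: there are pairwise disjoint nonempty connected branch sets
in `G`, one for each vertex of `H`, with an edge of `G` between the branch sets of
any two vertices adjacent in `H`. -/
def SimpleGraph.IsMinor {W V : Type*} (H : SimpleGraph W) (G : SimpleGraph V) : Prop :=
  ∃ f : W → Set V,
    (∀ w, (f w).Nonempty) ∧
    (∀ w, (G.induce (f w)).Connected) ∧
    (Pairwise fun w₁ w₂ => Disjoint (f w₁) (f w₂)) ∧
    ∀ ⦃w₁ w₂⦄, H.Adj w₁ w₂ → ∃ v₁ ∈ f w₁, ∃ v₂ ∈ f w₂, G.Adj v₁ v₂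

/-- A graph is planar iff it has no `K₅` minor and no `K₃,₃` minor (Kuratowski–Wagner). -/
def SimpleGraph.IsPlanar {V : Type*} (G : SimpleGraph V) : Prop :=
  ¬ (⊤ : SimpleGraph (Fin 5)).IsMinor G ∧
  ¬ (completeBipartiteGraph (Fin 3) (Fin 3)).IsMinor G

/-- A graph is 2-apex if it becomes planar after deleting at most two vertices. -/
def SimpleGraph.TwoApex {V : Type*} (G : SimpleGraph V) : Prop :=
  ∃ s : Set V, s.ncard ≤ 2 ∧ (G.induce sᶜ).IsPlanar

namespace TApx

open Classical

variable {V V' W : Type*}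

/-- Connectedness of a vertex set, phrased with cuts. -/
def Conn (G : SimpleGraph V) (s : Set V) : Prop :=
  s.Nonempty ∧ ∀ A : Set V, A ⊆ s → A.Nonempty → (∃ y ∈ s, y ∉ A) →
    ∃ x ∈ A, ∃ y ∈ s, y ∉ A ∧ G.Adj x y

theorem conn_of_connected {G : SimpleGraph V} {s : Set V} (h : (G.induce s).Connected) :
    Conn G s := by
  refine ⟨?_, ?_⟩
  · obtain ⟨x⟩ := h.nonempty
    exact ⟨x.1, x.2⟩
  · rintro A hA ⟨x, hx⟩ ⟨y, hy, hyA⟩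
    by_contra hcon
    push Not at hcon
    obtain ⟨p⟩ := h.preconnected ⟨x, hA hx⟩ ⟨y, hy⟩
    have key : ∀ (u w : s) (_ : (G.induce s).Walk u w), u.1 ∈ A → w.1 ∈ A := by
      intro u w p
      induction p with
      | nil => exact id
      | cons hadj _ ih =>
        intro hu
        apply ih
        by_contra hn
        exact hcon _ hu _ (Subtype.prop _) hn hadj
    exact hyA (key _ _ p hx)

theorem connected_of_conn {G : SimpleGraph V} {s : Set V} (h : Conn G s) :
    (G.induce s).Connected := by
  obtain ⟨⟨x0, hx0⟩, hc⟩ := h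
  have : Nonempty s := ⟨⟨x0, hx0⟩⟩
  refine SimpleGraph.Connected.mk ?_
  intro u w
  by_contra hn
  obtain ⟨x, hx, y, hy, hyA, hadj⟩ := hc {z | ∃ hz : z ∈ s, (G.induce s).Reachable u ⟨z, hz⟩}
    (fun z hz => hz.1) ⟨u.1, u.2, SimpleGraph.Reachable.refl _⟩
    ⟨w.1, w.2, fun ⟨_, h⟩ => hn h⟩
  obtain ⟨hxs, hr⟩ := hx
  apply hyA
  refine ⟨hy, hr.trans ?_⟩
  exact SimpleGraph.Adj.reachable (G := G.induce s) (u := ⟨x, hxs⟩) (v := ⟨y, hy⟩) hadj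

/-- A minor model. -/
structure Mdl (K : SimpleGraph W) (G : SimpleGraph V) (f : W → Set V) : Prop where
  conn : ∀ w, Conn G (f w)
  disj : ∀ w w' x, x ∈ f w → x ∈ f w' → w = w'
  cross : ∀ w w', K.Adj w w' → ∃ x ∈ f w, ∃ y ∈ f w', G.Adj x y

theorem minor_iff {K : SimpleGraph W} {G : SimpleGraph V} : K.IsMinor G ↔ ∃ f, Mdl K G f := by
  constructor
  · rintro ⟨f, h1, h2, h3, h4⟩
    refine ⟨f, fun w => conn_of_connected (h2 w), ?_, fun w w' h => h4 h⟩
    intro w w' x hx hx'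
    by_contra hne
    exact Set.disjoint_left.1 (h3 hne) hx hx'
  · rintro ⟨f, h⟩
    refine ⟨f, fun w => (h.conn w).1, fun w => connected_of_conn (h.conn w), ?_,
      fun w w' hw => h.cross w w' hw⟩
    intro w w' hne
    exact Set.disjoint_left.2 fun x hx hx' => hne (h.disj w w' x hx hx')

theorem Conn.image {G : SimpleGraph V} {G' : SimpleGraph V'} (φ : V → V')
    {s : Set V} (hφ : ∀ x ∈ s, ∀ y ∈ s, G.Adj x y → G'.Adj (φ x) (φ y)) (h : Conn G s) :
    Conn G' (φ '' s) := by
  refine ⟨h.1.image φ, ?_⟩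
  rintro A hA ⟨z, hz⟩ ⟨y, ⟨y0, hy0, rfl⟩, hyA⟩
  obtain ⟨z0, hz0, rfl⟩ := hA hz
  obtain ⟨x, hx, y, hy, hyA', hadj⟩ := h.2 {x | x ∈ s ∧ φ x ∈ A} (fun x hx => hx.1) ⟨z0, hz0, hz⟩
    ⟨y0, hy0, fun h => hyA h.2⟩
  exact ⟨φ x, hx.2, φ y, ⟨y, hy, rfl⟩, fun h => hyA' ⟨hy, h⟩, hφ x hx.1 y hy hadj⟩

theorem Mdl.image {K : SimpleGraph W} {G : SimpleGraph V} {G' : SimpleGraph V'} {f : W → Set V}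
    (φ : V → V') (hinj : Function.Injective φ)
    (hφ : ∀ x y, G.Adj x y → G'.Adj (φ x) (φ y)) (h : Mdl K G f) :
    Mdl K G' (fun w => φ '' f w) := by
  refine ⟨fun w => (h.conn w).image φ fun x _ y _ => hφ x y, ?_, ?_⟩
  · rintro w w' x ⟨y, hy, rfl⟩ ⟨z, hz, hzy⟩
    rw [hinj hzy] at hz
    exact h.disj w w' y hy hz
  · intro w w' hw
    obtain ⟨x, hx, y, hy, hxy⟩ := h.cross w w' hw
    exact ⟨φ x, ⟨x, hx, rfl⟩, φ y, ⟨y, hy, rfl⟩, hφ x y hxy⟩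

theorem minor_image {K : SimpleGraph W} {G : SimpleGraph V} {G' : SimpleGraph V'}
    (φ : V → V') (hinj : Function.Injective φ)
    (hφ : ∀ x y, G.Adj x y → G'.Adj (φ x) (φ y)) (h : K.IsMinor G) : K.IsMinor G' := by
  obtain ⟨f, hf⟩ := minor_iff.1 h
  exact minor_iff.2 ⟨_, hf.image φ hinj hφ⟩

theorem minor_mono {K : SimpleGraph W} {G G' : SimpleGraph V} (hle : G ≤ G')
    (h : K.IsMinor G) : K.IsMinor G' :=
  minor_image id Function.injective_id (fun _ _ h => hle h) h

/-- Suppressing a vertex with at most two neighbours. -/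
theorem minor_suppress {K : SimpleGraph W} {G : SimpleGraph V} (v p q : V)
    {G' : SimpleGraph {w : V // w ≠ v}}
    (hK : ∀ w : W, ∃ a b c, K.Adj w a ∧ K.Adj w b ∧ K.Adj w c ∧ a ≠ b ∧ a ≠ c ∧ b ≠ c)
    (hv : ∀ x, G.Adj v x → x = p ∨ x = q)
    (h1 : ∀ x y : {w : V // w ≠ v}, G.Adj x.1 y.1 → G'.Adj x y)
    (h2 : ∀ x y : {w : V // w ≠ v}, x ≠ y → G.Adj v x.1 → G.Adj v y.1 → G'.Adj x y)
    (h : K.IsMinor G) : K.IsMinor G' := by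
  obtain ⟨f, hf⟩ := minor_iff.1 h
  have hns : ∀ w, ∃ x ∈ f w, x ≠ v := by
    intro w
    by_contra hcon
    push Not at hcon
    obtain ⟨a, b, c, ha, hb, hc, hab, hac, hbc⟩ := hK w
    obtain ⟨x, hx, xa, hxa, hxx⟩ := hf.cross w a ha
    obtain ⟨y, hy, yb, hyb, hyy⟩ := hf.cross w b hb
    obtain ⟨z, hz, zc, hzc, hzz⟩ := hf.cross w c hc
    rw [hcon x hx] at hxx
    rw [hcon y hy] at hyy
    rw [hcon z hz] at hzz
    have n1 : xa ≠ yb := fun e => hab (hf.disj _ _ xa hxa (e ▸ hyb))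
    have n2 : xa ≠ zc := fun e => hac (hf.disj _ _ xa hxa (e ▸ hzc))
    have n3 : yb ≠ zc := fun e => hbc (hf.disj _ _ yb hyb (e ▸ hzc))
    rcases hv _ hxx with rfl | rfl <;> rcases hv _ hyy with rfl | rfl <;>
      rcases hv _ hzz with rfl | rfl <;> simp_all
  -- if `v ∈ f w` then `v` has a neighbour in `f w`
  have hnb : ∀ w, v ∈ f w → ∃ x ∈ f w, x ≠ v ∧ G.Adj v x := by
    intro w hvw
    obtain ⟨x, hx, hxv⟩ := hns w
    obtain ⟨a, ha, y, hy, hyA, hadj⟩ := (hf.conn w).2 {v} (by simpa using hvw) ⟨v, rfl⟩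
      ⟨x, hx, by simpa using hxv⟩
    have hav : a = v := ha
    subst hav
    exact ⟨y, hy, by simpa using hyA, hadj⟩
  refine minor_iff.2 ⟨fun w => Subtype.val ⁻¹' f w, ?_, ?_, ?_⟩
  · intro w
    obtain ⟨x0, hx0, hx0v⟩ := hns w
    refine ⟨⟨⟨x0, hx0v⟩, hx0⟩, ?_⟩
    rintro A hA ⟨z, hz⟩ ⟨y, hy, hyA⟩
    have hval : ∀ t : {w : V // w ≠ v}, t.1 ∈ (Subtype.val '' A : Set V) → t ∈ A := by
      rintro t ⟨t', ht', e⟩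
      rwa [← Subtype.ext e]
    obtain ⟨a, ⟨a', ha', rfl⟩, b, hb, hbA, hab⟩ := (hf.conn w).2 (Subtype.val '' A)
      (by rintro _ ⟨t, ht, rfl⟩; exact hA ht) ⟨z.1, z, hz, rfl⟩
      ⟨y.1, hy, fun h => hyA (hval y h)⟩
    by_cases hbv : b = v
    · subst hbv
      obtain ⟨c, hc, d, hd, hdA, hcd⟩ := (hf.conn w).2 (insert b (Subtype.val '' A))
        (by
          rintro t (rfl | ⟨t, ht, rfl⟩)
          · exact hb
          · exact hA ht) ⟨b, Or.inl rfl⟩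
        ⟨y.1, hy, by
          rintro (h | h)
          · exact y.2 h
          · exact hyA (hval y h)⟩
      have hdb : d ≠ b := fun e => hdA (Or.inl e)
      have hdA' : (⟨d, hdb⟩ : {w : V // w ≠ b}) ∉ A := fun h => hdA (Or.inr ⟨_, h, rfl⟩)
      rcases hc with rfl | ⟨c', hc', rfl⟩
      · refine ⟨a', ha', ⟨d, hdb⟩, hd, hdA', h2 _ _ ?_ hab.symm hcd⟩
        rintro rfl
        exact hdA' ha'
      · exact ⟨c', hc', ⟨d, hdb⟩, hd, hdA', h1 _ _ hcd⟩
    · exact ⟨a', ha', ⟨b, hbv⟩, hb, fun h => hbA ⟨_, h, rfl⟩, h1 _ _ hab⟩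
  · intro w w' x hx hx'
    exact hf.disj w w' x.1 hx hx'
  · intro w w' hw
    obtain ⟨x, hx, y, hy, hxy⟩ := hf.cross w w' hw
    have hne : w ≠ w' := hw.ne
    by_cases hxv : x = v
    · subst hxv
      obtain ⟨x', hx', hx'v, hadj⟩ := hnb w hx
      have hyv : y ≠ x := hxy.ne.symm
      refine ⟨⟨x', hx'v⟩, hx', ⟨y, hyv⟩, hy, h2 _ _ ?_ hadj hxy⟩
      intro e
      have e' : x' = y := congrArg Subtype.val e
      exact hne (hf.disj _ _ x' hx' (e' ▸ hy))
    · by_cases hyv : y = v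
      · subst hyv
        obtain ⟨y', hy', hy'v, hadj⟩ := hnb w' hy
        refine ⟨⟨x, hxv⟩, hx, ⟨y', hy'v⟩, hy', h2 _ _ ?_ hxy.symm hadj⟩
        intro e
        have e' : x = y' := congrArg Subtype.val e
        exact hne (hf.disj _ _ x hx (e' ▸ hy'))
      · exact ⟨⟨x, hxv⟩, hx, ⟨y, hyv⟩, hy, h1 _ _ hxy⟩

end TApx

namespace TApx

open Classical

variable {V V' W : Type*}

/-- Deleting one edge that is not needed for the minor model. -/
theorem Mdl.del {K : SimpleGraph W} {G : SimpleGraph V} {f : W → Set V} (h : Mdl K G f) (x y : V)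
    (hconn : ∀ w, x ∈ f w → y ∈ f w → ∀ A ⊆ f w, (x ∈ A ∧ y ∉ A ∨ y ∈ A ∧ x ∉ A) →
      ∃ a ∈ A, ∃ b ∈ f w, b ∉ A ∧ G.Adj a b ∧ s(a, b) ≠ s(x, y))
    (hcross : ∀ w w', x ∈ f w → y ∈ f w' → K.Adj w w' →
      ∃ a ∈ f w, ∃ b ∈ f w', G.Adj a b ∧ s(a, b) ≠ s(x, y)) :
    Mdl K (G.deleteEdges {s(x, y)}) f := by
  refine ⟨fun w => ⟨(h.conn w).1, ?_⟩, h.disj, ?_⟩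
  · intro A hA hne hy
    obtain ⟨a, ha, b, hb, hbA, hab⟩ := (h.conn w).2 A hA hne hy
    by_cases he : s(a, b) = s(x, y)
    · have hxy : x ∈ f w ∧ y ∈ f w ∧ (x ∈ A ∧ y ∉ A ∨ y ∈ A ∧ x ∉ A) := by
        rcases Sym2.eq_iff.1 he with ⟨rfl, rfl⟩ | ⟨rfl, rfl⟩
        · exact ⟨hA ha, hb, Or.inl ⟨ha, hbA⟩⟩
        · exact ⟨hb, hA ha, Or.inr ⟨ha, hbA⟩⟩
      obtain ⟨a, ha, b, hb, hbA, hab, hn⟩ := hconn w hxy.1 hxy.2.1 A hA hxy.2.2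
      exact ⟨a, ha, b, hb, hbA, by simpa [SimpleGraph.deleteEdges_adj] using ⟨hab, by simpa using hn⟩⟩
    · exact ⟨a, ha, b, hb, hbA, by simpa [SimpleGraph.deleteEdges_adj] using ⟨hab, by simpa using he⟩⟩
  · intro w w' hw
    obtain ⟨a, ha, b, hb, hab⟩ := h.cross w w' hw
    by_cases he : s(a, b) = s(x, y)
    · rcases Sym2.eq_iff.1 he with ⟨rfl, rfl⟩ | ⟨rfl, rfl⟩
      · obtain ⟨a, ha, b, hb, hab, hn⟩ := hcross w w' ha hb hw
        exact ⟨a, ha, b, hb, by simpa [SimpleGraph.deleteEdges_adj] using ⟨hab, by simpa using hn⟩⟩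
      · obtain ⟨a, ha, b, hb, hab, hn⟩ := hcross w' w hb ha hw.symm
        refine ⟨b, hb, a, ha, ?_⟩
        rw [SimpleGraph.deleteEdges_adj]
        refine ⟨hab.symm, ?_⟩
        rw [Set.mem_singleton_iff, Sym2.eq_swap]
        exact hn
    · exact ⟨a, ha, b, hb, by simpa [SimpleGraph.deleteEdges_adj] using ⟨hab, by simpa using he⟩⟩

/-- No edge can be deleted without destroying the minor. -/
def EMin (K : SimpleGraph W) (G : SimpleGraph V) : Prop :=
  ∀ x y, G.Adj x y → ¬ K.IsMinor (G.deleteEdges {s(x, y)})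

theorem exists_emin [Finite V] {K : SimpleGraph W} {G : SimpleGraph V} (h : K.IsMinor G) :
    ∃ H ≤ G, K.IsMinor H ∧ EMin K H := by
  obtain ⟨H, hle, hH⟩ := exists_minimal_le_of_wellFoundedLT (fun H : SimpleGraph V => K.IsMinor H) G h
  refine ⟨H, hle, hH.1, ?_⟩
  intro x y hxy hm
  have := hH.2 hm (SimpleGraph.deleteEdges_le _)
  have h2 := this hxy
  simp [SimpleGraph.deleteEdges_adj] at h2

theorem EMin.cover {K : SimpleGraph W} {G : SimpleGraph V} {f : W → Set V} (hm : EMin K G)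
    (h : Mdl K G f) {x y : V} (hxy : G.Adj x y) : ∃ w, x ∈ f w := by
  by_contra hcon
  push Not at hcon
  exact hm x y hxy (minor_iff.2 ⟨f, h.del x y (fun w hx => absurd hx (hcon w))
    (fun w _ hx => absurd hx (hcon w))⟩)

theorem EMin.no_triangle {K : SimpleGraph W} {G : SimpleGraph V} {f : W → Set V} (hm : EMin K G)
    (h : Mdl K G f) (hK : ∀ a b c, K.Adj a b → K.Adj b c → ¬ K.Adj a c) {x y z : V}
    (hxy : G.Adj x y) (hyz : G.Adj y z) (hxz : G.Adj x z) : False := by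
  -- two vertices in one branch set, one in another
  have two : ∀ {x y z : V} {w w' : W}, G.Adj x y → G.Adj y z → G.Adj x z →
      x ∈ f w → y ∈ f w → z ∈ f w' → w ≠ w' → False := by
    intro x y z w w' hxy hyz hxz hx hy hz hne
    apply hm x z hxz
    refine minor_iff.2 ⟨f, h.del x z ?_ ?_⟩
    · intro w1 hx1 hz1
      exact absurd ((h.disj _ _ _ hx1 hx).symm.trans (h.disj _ _ _ hz1 hz)) hne
    · intro w1 w2 hx1 hz2 _
      obtain rfl := h.disj _ _ _ hx1 hx
      obtain rfl := h.disj _ _ _ hz2 hz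
      refine ⟨y, hy, z, hz, hyz, ?_⟩
      intro e
      rcases Sym2.eq_iff.1 e with ⟨rfl, _⟩ | ⟨rfl, _⟩
      · exact hxy.ne rfl
      · exact hyz.ne rfl
  have non : ∀ {x y : V} {w w' : W}, G.Adj x y → x ∈ f w → y ∈ f w' → w ≠ w' → K.Adj w w' := by
    intro x y w w' hxy hx hy hne
    by_contra hn
    apply hm x y hxy
    refine minor_iff.2 ⟨f, h.del x y ?_ ?_⟩
    · intro w1 hx1 hz1
      exact absurd ((h.disj _ _ _ hx1 hx).symm.trans (h.disj _ _ _ hz1 hy)) hne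
    · intro w1 w2 hx1 hy1 ha
      obtain rfl := h.disj _ _ _ hx1 hx
      obtain rfl := h.disj _ _ _ hy1 hy
      exact absurd ha hn
  obtain ⟨wx, hx⟩ := hm.cover h hxy
  obtain ⟨wy, hy⟩ := hm.cover h hyz
  obtain ⟨wz, hz⟩ := hm.cover h hyz.symm
  by_cases h1 : wx = wy
  · subst h1
    by_cases h2 : wx = wz
    · subst h2
      apply hm x y hxy
      refine minor_iff.2 ⟨f, h.del x y ?_ ?_⟩
      · intro w hxw hyw A hA hs
        obtain rfl := h.disj _ _ _ hxw hx
        have e1 : s(x, z) ≠ s(x, y) := by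
          intro e
          rcases Sym2.eq_iff.1 e with ⟨_, e⟩ | ⟨e, _⟩
          · exact hyz.ne e.symm
          · exact hxy.ne e
        have e2 : s(y, z) ≠ s(x, y) := by
          intro e
          rcases Sym2.eq_iff.1 e with ⟨e, _⟩ | ⟨_, e⟩
          · exact hxy.ne e.symm
          · exact hxz.ne e.symm
        by_cases hzA : z ∈ A
        · rcases hs with ⟨_, hyA⟩ | ⟨_, hxA⟩
          · exact ⟨z, hzA, y, hyw, hyA, hyz.symm, by rwa [Sym2.eq_swap]⟩
          · exact ⟨z, hzA, x, hxw, hxA, hxz.symm, by rwa [Sym2.eq_swap]⟩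
        · rcases hs with ⟨hxA, _⟩ | ⟨hyA, _⟩
          · exact ⟨x, hxA, z, hz, hzA, hxz, e1⟩
          · exact ⟨y, hyA, z, hz, hzA, hyz, e2⟩
      · intro w1 w2 hx1 hy1 ha
        obtain rfl := h.disj _ _ _ hx1 hx
        obtain rfl := h.disj _ _ _ hy1 hy
        exact absurd ha (K.irrefl)
    · exact two hxy hyz hxz hx hy hz h2
  · by_cases h2 : wx = wz
    · subst h2
      exact two hxz hyz.symm hxy hx hz hy h1
    · by_cases h3 : wy = wz
      · subst h3
        exact two hyz hxz.symm hxy.symm hy hz hx (Ne.symm h1)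
      · exact hK _ _ _ (non hxy hx hy h1) (non hyz hy hz h3) (non hxz hx hz h2)

theorem EMin.no_star [Fintype W] {K : SimpleGraph W} {G : SimpleGraph V} {f : W → Set V}
    (hm : EMin K G) (h : Mdl K G f) (hK : ∀ w, (K.neighborFinset w).card ≤ 3) (v : V)
    (x : Fin 4 → V) (hinj : Function.Injective x) (hx : ∀ i, G.Adj v (x i)) : False := by
  obtain ⟨w, hw⟩ := hm.cover h (hx 0)
  have hch : ∀ w', ∃ b c, K.Adj w w' → b ∈ f w ∧ c ∈ f w' ∧ G.Adj b c := by
    intro w'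
    by_cases ha : K.Adj w w'
    · obtain ⟨b, hb, c, hc, hbc⟩ := h.cross w w' ha
      exact ⟨b, c, fun _ => ⟨hb, hc, hbc⟩⟩
    · exact ⟨v, v, fun h => absurd h ha⟩
  choose b c hbc using hch
  let Gv : SimpleGraph V :=
    { Adj := fun p q => G.Adj p q ∧ p ∈ f w ∧ q ∈ f w ∧ p ≠ v ∧ q ≠ v
      symm := ⟨fun p q hpq => ⟨hpq.1.symm, hpq.2.2.1, hpq.2.1, hpq.2.2.2.2, hpq.2.2.2.1⟩⟩
      loopless := ⟨fun p hp => G.irrefl hp.1⟩ }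
  have hiso : ∀ y, Gv.Reachable y v → y = v := by
    intro y hr
    by_contra hne
    obtain ⟨p⟩ := hr.symm
    cases p with
    | nil => exact hne rfl
    | cons hadj _ => exact hadj.2.2.2.1 rfl
  have claim : ∀ i, ∃ k, K.Adj w k ∧ ((x i ∉ f w ∧ b k = v ∧ c k = x i) ∨
      (x i ∈ f w ∧ Gv.Reachable (x i) (b k))) := by
    intro i
    by_contra hcon
    push Not at hcon
    by_cases hxi : x i ∈ f w
    · -- drop the component of `x i`
      have hno : ∀ k, K.Adj w k → ¬ Gv.Reachable (x i) (b k) := fun k hk => (hcon k hk).2 hxi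
      let C : Set V := {y | Gv.Reachable (x i) y}
      have hvC : v ∉ C := fun hr => (hx i).ne (hiso _ hr).symm
      have hstep : ∀ p q, G.Adj p q → p ∈ f w → q ∈ f w → p ≠ v → q ≠ v → p ∈ C → q ∈ C := by
        intro p q hpq hp hq hpv hqv hpC
        exact SimpleGraph.Reachable.trans hpC
          (SimpleGraph.Adj.reachable (G := Gv) ⟨hpq, hp, hq, hpv, hqv⟩)
      let f' : W → Set V := Function.update f w (f w \ C)
      have hsub : ∀ u, f' u ⊆ f u := by
        intro u
        by_cases hu : u = w
        · subst hu
          simp [f']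
        · simp [f', hu]
      have hf'w : f' w = f w \ C := by simp [f']
      have hf' : ∀ u, u ≠ w → f' u = f u := fun u hu => by simp [f', hu]
      have hM : Mdl K G f' := by
        refine ⟨?_, fun u u' z hz hz' => h.disj u u' z (hsub _ hz) (hsub _ hz'), ?_⟩
        · intro u
          by_cases hu : u = w
          · subst hu
            rw [hf'w]
            refine ⟨⟨v, hw, hvC⟩, ?_⟩
            rintro A hA hne ⟨y, hy, hyA⟩
            by_cases hvA : v ∈ A
            · obtain ⟨p, hp, q, hq, hqA, hpq⟩ := (h.conn u).2 (A ∪ (C ∩ f u))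
                (Set.union_subset (fun z hz => (hA hz).1) Set.inter_subset_right)
                (hne.mono Set.subset_union_left) ⟨y, hy.1, by
                  rintro (h | h)
                  · exact hyA h
                  · exact hy.2 h.1⟩
              have hqC : q ∉ C := fun hc => hqA (Or.inr ⟨hc, hq⟩)
              have hqv : q ≠ v := fun e => hqA (Or.inl (e ▸ hvA))
              rcases hp with hp | hp
              · exact ⟨p, hp, q, ⟨hq, hqC⟩, fun h => hqA (Or.inl h), hpq⟩
              · exact absurd (hstep p q hpq hp.2 hq (fun e => hvC (e ▸ hp.1)) hqv hp.1) hqC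
            · obtain ⟨p, hp, q, hq, hqA, hpq⟩ := (h.conn u).2 A (fun z hz => (hA hz).1) hne
                ⟨y, hy.1, hyA⟩
              refine ⟨p, hp, q, ⟨hq, fun hqC => ?_⟩, hqA, hpq⟩
              exact (hA hp).2 (hstep q p hpq.symm hq (hA hp).1 (fun e => hvC (e ▸ hqC))
                (fun e => hvA (e ▸ hp)) hqC)
          · rw [hf' u hu]
            exact h.conn u
        · intro u u' huu
          by_cases hu : u = w
          · subst hu
            have hb := hbc u' huu
            exact ⟨b u', by rw [hf'w]; exact ⟨hb.1, hno u' huu⟩, c u',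
              by rw [hf' u' huu.ne.symm]; exact hb.2.1, hb.2.2⟩
          · by_cases hu' : u' = w
            · subst hu'
              have hb := hbc u huu.symm
              exact ⟨c u, by rw [hf' u hu]; exact hb.2.1, b u,
                by rw [hf'w]; exact ⟨hb.1, hno u huu.symm⟩, hb.2.2.symm⟩
            · rw [hf' u hu, hf' u' hu']
              exact h.cross u u' huu
      obtain ⟨u, hu⟩ := hm.cover hM (hx i).symm
      obtain rfl := h.disj u w (x i) (hsub _ hu) hxi
      rw [hf'w] at hu
      exact hu.2 (SimpleGraph.Reachable.refl _)
    · -- edge leaving the branch set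
      apply hm v (x i) (hx i)
      refine minor_iff.2 ⟨f, h.del v (x i) ?_ ?_⟩
      · intro u hvu hxu
        obtain rfl := h.disj _ _ _ hvu hw
        exact absurd hxu hxi
      · intro u u' hvu hxu' huu
        obtain rfl := h.disj _ _ _ hvu hw
        have hb := hbc u' huu
        refine ⟨b u', hb.1, c u', hb.2.1, hb.2.2, ?_⟩
        intro e
        rcases Sym2.eq_iff.1 e with ⟨e1, e2⟩ | ⟨e1, e2⟩
        · exact (hcon u' huu).1 hxi e1 e2
        · exact hxi (e1 ▸ hb.1)
  choose k hk hk' using claim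
  obtain ⟨i, _, j, _, hij, hkij⟩ := Finset.exists_ne_map_eq_of_card_lt_of_maps_to
    (s := (Finset.univ : Finset (Fin 4))) (t := K.neighborFinset w) (f := k)
    (by simpa using lt_of_le_of_lt (hK w) (by norm_num)) (by intro i _; simpa using hk i)
  rcases hk' i with ⟨hi, hbi, hci⟩ | ⟨hi, hri⟩
  · rcases hk' j with ⟨hj, hbj, hcj⟩ | ⟨hj, hrj⟩
    · exact hij (hinj (by rw [← hci, ← hcj, hkij]))
    · rw [← hkij, hbi] at hrj
      exact (hx j).ne (hiso _ hrj).symm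
  · rcases hk' j with ⟨hj, hbj, hcj⟩ | ⟨hj, hrj⟩
    · rw [hkij, hbj] at hri
      exact (hx i).ne (hiso _ hri).symm
    · rw [hkij] at hri
      have hr : Gv.Reachable (x i) (x j) := hri.trans hrj.symm
      apply hm v (x i) (hx i)
      refine minor_iff.2 ⟨f, h.del v (x i) ?_ ?_⟩
      · intro u hvu hxu A hA hs
        obtain rfl := h.disj _ _ _ hvu hw
        have hne : s(v, x j) ≠ s(v, x i) := by
          intro e
          rcases Sym2.eq_iff.1 e with ⟨_, e⟩ | ⟨e, _⟩
          · exact hij (hinj e).symm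
          · exact (hx i).ne e
        have cr : ∀ p q, Gv.Reachable p q → p ∈ A → q ∉ A →
            ∃ a ∈ A, ∃ d ∈ f u, d ∉ A ∧ G.Adj a d ∧ s(a, d) ≠ s(v, x i) := by
          rintro p q ⟨wk⟩ hp hq
          obtain ⟨d, _, h1, h2⟩ := wk.exists_boundary_dart A hp hq
          have had := d.adj
          refine ⟨_, h1, _, had.2.2.1, h2, had.1, ?_⟩
          intro e
          rcases Sym2.eq_iff.1 e with ⟨e, _⟩ | ⟨_, e⟩
          · exact had.2.2.2.1 e
          · exact had.2.2.2.2 e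
        by_cases hjA : x j ∈ A
        · rcases hs with ⟨hvA, hxA⟩ | ⟨hxA, hvA⟩
          · exact cr _ _ hr.symm hjA hxA
          · exact ⟨x j, hjA, v, hvu, hvA, (hx j).symm, by rwa [Sym2.eq_swap]⟩
        · rcases hs with ⟨hvA, hxA⟩ | ⟨hxA, hvA⟩
          · exact ⟨v, hvA, x j, hj, hjA, hx j, hne⟩
          · exact cr _ _ hr hxA hjA
      · intro u u' hvu hxu' huu
        exact absurd ((h.disj _ _ _ hvu hw).trans (h.disj _ _ _ hi hxu')) huu.ne

end TApx

namespace TApx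

instance k33dec : DecidableRel (completeBipartiteGraph (Fin 3) (Fin 3)).Adj := fun x y =>
  inferInstanceAs (Decidable (x.isLeft = true ∧ y.isRight = true ∨ x.isRight = true ∧ y.isLeft = true))

theorem k33_edges : (completeBipartiteGraph (Fin 3) (Fin 3)).edgeFinset.card = 9 := by
  decide +kernel

theorem k33_deg : ∀ w, ((completeBipartiteGraph (Fin 3) (Fin 3)).neighborFinset w).card ≤ 3 := by
  decide +kernel

theorem k5_edges : (⊤ : SimpleGraph (Fin 5)).edgeFinset.card = 10 := by
  decide +kernel

open Classical

variable {V V' W : Type*}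

theorem Mdl.count [Fintype V] [Fintype W] {K : SimpleGraph W} {G : SimpleGraph V} {f : W → Set V}
    (h : Mdl K G f) :
    (∑ w, (f w).toFinset.card) + K.edgeFinset.card ≤ G.edgeFinset.card + Fintype.card W := by
  -- the branch set of a vertex
  let c : V → Option W := fun x => if hx : ∃ w, x ∈ f w then some hx.choose else none
  have hc : ∀ w x, x ∈ f w → c x = some w := by
    intro w x hx
    have hex : ∃ w, x ∈ f w := ⟨w, hx⟩
    have : c x = some hex.choose := dif_pos hex
    rw [this, h.disj _ _ x hex.choose_spec hx]
  let F : Sym2 (Option W) → Finset (Sym2 V) := fun t => G.edgeFinset.filter fun e => Sym2.map c e = t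
  have hdisj : ∀ T : Finset (Sym2 (Option W)), ∑ t ∈ T, (F t).card ≤ G.edgeFinset.card := by
    intro T
    rw [← Finset.card_biUnion]
    · apply Finset.card_le_card
      intro e he
      simp only [F, Finset.mem_biUnion, Finset.mem_filter] at he
      obtain ⟨_, _, he, _⟩ := he
      exact he
    · intro t _ t' _ hne
      rw [Function.onFun, Finset.disjoint_left]
      intro e he he'
      simp only [F, Finset.mem_filter] at he he'
      exact hne (he.2.symm.trans he'.2)
  have hloop : ∀ w, (f w).toFinset.card ≤ (F s(some w, some w)).card + 1 := by
    intro w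
    have h1 := (connected_of_conn (h.conn w)).card_vert_le_card_edgeSet_add_one
    have h2 : Nat.card (G.induce (f w)).edgeSet ≤ (F s(some w, some w)).card := by
      have e0 : (F s(some w, some w)).card = Nat.card (F s(some w, some w)) := by
        rw [Nat.card_eq_fintype_card, Fintype.card_coe]
      rw [e0]
      refine Nat.card_le_card_of_injective
        (fun e : (G.induce (f w)).edgeSet => (⟨Sym2.map Subtype.val e.1, ?_⟩ :
          {x // x ∈ F s(some w, some w)})) ?_
      · obtain ⟨e, he⟩ := e
        induction e using Sym2.ind with
        | _ a b =>
          simp only [F, Finset.mem_filter, SimpleGraph.mem_edgeFinset, Sym2.map_mk,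
            SimpleGraph.mem_edgeSet]
          exact ⟨he, by rw [hc w _ a.2, hc w _ b.2]⟩
      · intro e e' hee
        have := congrArg Subtype.val hee
        exact Subtype.ext (Sym2.map.injective Subtype.val_injective this)
    rw [Set.toFinset_card, ← Nat.card_eq_fintype_card]
    omega
  have hedge : ∀ e ∈ K.edgeFinset, 1 ≤ (F (Sym2.map some e)).card := by
    intro e
    induction e using Sym2.ind with
    | _ a b =>
      intro he
      rw [SimpleGraph.mem_edgeFinset, SimpleGraph.mem_edgeSet] at he
      obtain ⟨x, hx, y, hy, hxy⟩ := h.cross a b he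
      rw [Nat.succ_le_iff, Finset.card_pos]
      refine ⟨s(x, y), ?_⟩
      simp only [F, Finset.mem_filter, SimpleGraph.mem_edgeFinset, SimpleGraph.mem_edgeSet]
      exact ⟨hxy, by simp [hc a x hx, hc b y hy]⟩
  let T1 : Finset (Sym2 (Option W)) := Finset.univ.image fun w => s(some w, some w)
  let T2 : Finset (Sym2 (Option W)) := K.edgeFinset.image (Sym2.map some)
  have hT : Disjoint T1 T2 := by
    rw [Finset.disjoint_left]
    intro t h1 h2
    simp only [T1, T2, Finset.mem_image] at h1 h2
    obtain ⟨w, _, rfl⟩ := h1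
    obtain ⟨e, he, h2⟩ := h2
    induction e using Sym2.ind with
    | _ a b =>
      rw [SimpleGraph.mem_edgeFinset, SimpleGraph.mem_edgeSet] at he
      simp only [Sym2.map_mk, Sym2.eq_iff, Option.some.injEq] at h2
      have hne := he.ne
      rcases h2 with ⟨rfl, rfl⟩ | ⟨rfl, rfl⟩ <;> exact hne rfl
  have h1 := hdisj (T1 ∪ T2)
  rw [Finset.sum_union hT] at h1
  have e1 : ∑ t ∈ T1, (F t).card = ∑ w, (F s(some w, some w)).card := by
    simp only [T1]
    rw [Finset.sum_image]
    intro a _ b _ hab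
    simpa using hab
  have e2 : ∑ t ∈ T2, (F t).card = ∑ e ∈ K.edgeFinset, (F (Sym2.map some e)).card := by
    simp only [T2]
    rw [Finset.sum_image]
    intro a _ b _ hab
    exact Sym2.map.injective (Option.some_injective W) hab
  have e3 : K.edgeFinset.card ≤ ∑ e ∈ K.edgeFinset, (F (Sym2.map some e)).card := by
    rw [Finset.card_eq_sum_ones]
    exact Finset.sum_le_sum hedge
  have e4 : ∑ w, (f w).toFinset.card ≤ ∑ w, (F s(some w, some w)).card + Fintype.card W := by
    calc ∑ w, (f w).toFinset.card ≤ ∑ w, ((F s(some w, some w)).card + 1) :=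
          Finset.sum_le_sum fun w _ => hloop w
      _ = _ := by simp [Finset.sum_add_distrib]
  omega

theorem exists_struct [Fintype V] [Fintype W] {K : SimpleGraph W} {G : SimpleGraph V}
    (h : K.IsMinor G) : ∃ H ≤ G, ∃ f, Mdl K H f ∧ EMin K H ∧ ∃ U : Finset V,
      (∀ x y, H.Adj x y → x ∈ U) ∧ Fintype.card W ≤ U.card ∧
      U.card + K.edgeFinset.card ≤ H.edgeFinset.card + Fintype.card W := by
  obtain ⟨H, hle, hm, hmin⟩ := exists_emin h
  obtain ⟨f, hf⟩ := minor_iff.1 hm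
  refine ⟨H, hle, f, hf, hmin, Finset.univ.biUnion fun w => (f w).toFinset, ?_, ?_, ?_⟩
  · intro x y hxy
    obtain ⟨w, hw⟩ := hmin.cover hf hxy
    simp only [Finset.mem_biUnion, Set.mem_toFinset]
    exact ⟨w, Finset.mem_univ _, hw⟩
  · rw [Finset.card_biUnion]
    · rw [← Finset.card_univ, Finset.card_eq_sum_ones]
      apply Finset.sum_le_sum
      intro w _
      rw [Nat.succ_le_iff, Finset.card_pos, Set.toFinset_nonempty]
      exact (hf.conn w).1
    · intro a _ b _ hab
      rw [Function.onFun, Finset.disjoint_left]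
      intro x hx hx'
      exact hab (hf.disj a b x (Set.mem_toFinset.1 hx) (Set.mem_toFinset.1 hx'))
  · exact le_trans (Nat.add_le_add_right Finset.card_biUnion_le _) hf.count

theorem struct5 [Fintype V] {G : SimpleGraph V} (h : (⊤ : SimpleGraph (Fin 5)).IsMinor G) :
    ∃ H ≤ G, ∃ U : Finset V, (∀ x y, H.Adj x y → x ∈ U) ∧
      U.card + 5 ≤ H.edgeFinset.card := by
  obtain ⟨H, hle, f, hf, hmin, U, hU, h5, hc⟩ := exists_struct h
  refine ⟨H, hle, U, hU, ?_⟩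
  have : ∀ I : Fintype (⊤ : SimpleGraph (Fin 5)).edgeSet,
      (@SimpleGraph.edgeFinset _ (⊤ : SimpleGraph (Fin 5)) I).card = 10 := by
    intro I
    convert k5_edges
  have h0 : Fintype.card (Fin 5) = 5 := by simp
  rw [this _, h0] at hc
  omega

theorem struct33 [Fintype V] {G : SimpleGraph V}
    (h : (completeBipartiteGraph (Fin 3) (Fin 3)).IsMinor G) :
    ∃ H ≤ G, ∃ U : Finset V, (∀ x y, H.Adj x y → x ∈ U) ∧ 6 ≤ U.card ∧
      U.card + 3 ≤ H.edgeFinset.card ∧ (∀ v, (H.neighborFinset v).card ≤ 3) ∧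
      (∀ x y z, H.Adj x y → H.Adj y z → H.Adj x z → False) := by
  obtain ⟨H, hle, f, hf, hmin, U, hU, h6, hc⟩ := exists_struct h
  have hE : ∀ I : Fintype (completeBipartiteGraph (Fin 3) (Fin 3)).edgeSet,
      (@SimpleGraph.edgeFinset _ (completeBipartiteGraph (Fin 3) (Fin 3)) I).card = 9 := by
    intro I
    convert k33_edges
  have hD : ∀ w, ∀ I : Fintype ((completeBipartiteGraph (Fin 3) (Fin 3)).neighborSet w),
      (@SimpleGraph.neighborFinset _ (completeBipartiteGraph (Fin 3) (Fin 3)) w I).card ≤ 3 := by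
    intro w I
    convert k33_deg w
  rw [hE _] at hc
  simp only [Fintype.card_sum, Fintype.card_fin] at hc h6
  refine ⟨H, hle, U, hU, by omega, by omega, ?_, ?_⟩
  · intro v
    by_contra hcon
    push Not at hcon
    obtain ⟨t, ht, htc⟩ := Finset.exists_subset_card_eq (n := 4) (s := H.neighborFinset v) hcon
    let e := t.equivFinOfCardEq htc
    refine hmin.no_star hf (fun w => hD w _) v (fun i => (e.symm i).1)
      (Subtype.val_injective.comp e.symm.injective) ?_
    intro i
    have := ht (e.symm i).2
    simpa using this
  · intro x y z hxy hyz hxz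
    refine hmin.no_triangle hf ?_ hxy hyz hxz
    rintro (a | a) (b | b) (c | c) <;> simp

end TApx

namespace TApx

open Classical

variable {V V' W : Type*}

/-- The cost of a vertex relative to a subgraph of `H`. -/
noncomputable def wt [Fintype V] (H H' : SimpleGraph V) (v : V) : ℕ :=
  if H'.degree v = 0 then H.degree v - 2 else H.degree v - H'.degree v

noncomputable def supp [Fintype V] (H : SimpleGraph V) : Finset V :=
  Finset.univ.filter fun v => H.degree v ≠ 0

noncomputable def excess [Fintype V] (H : SimpleGraph V) : ℕ := ∑ v, (H.degree v - 2)

theorem supp_subset [Fintype V] {H : SimpleGraph V} {U : Finset V}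
    (hU : ∀ x y, H.Adj x y → x ∈ U) : supp H ⊆ U := by
  intro v hv
  simp only [supp, Finset.mem_filter, Finset.mem_univ, true_and] at hv
  have : 0 < H.degree v := Nat.pos_of_ne_zero hv
  rw [SimpleGraph.degree_pos_iff_exists_adj] at this
  obtain ⟨w, hw⟩ := this
  exact hU v w hw

theorem wt_sum [Fintype V] {H H' : SimpleGraph V} (hle : H' ≤ H) (k : ℕ)
    (hk : (supp H').card + k ≤ H'.edgeFinset.card) :
    ∑ v, wt H H' v + 2 * k ≤ excess H := by
  have h1 : ∀ v, wt H H' v + H'.degree v ≤ (H.degree v - 2) + (if H'.degree v ≠ 0 then 2 else 0) := by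
    intro v
    have := SimpleGraph.degree_le_of_le (v := v) hle
    unfold wt
    split_ifs <;> simp_all <;> omega
  have h2 := Finset.sum_le_sum fun v (_ : v ∈ Finset.univ) => h1 v
  rw [Finset.sum_add_distrib, Finset.sum_add_distrib, SimpleGraph.sum_degrees_eq_twice_card_edges,
    ← Finset.sum_filter, Finset.sum_const] at h2
  change _ ≤ excess H + (supp H').card • 2 at h2
  rw [smul_eq_mul] at h2
  omega

theorem degree_lt [Fintype V] {H H' : SimpleGraph V} (hle : H' ≤ H) (v : V) (s : Finset V)
    (hs : ∀ x ∈ s, H.Adj v x ∧ ¬ H'.Adj v x) : H'.degree v + s.card ≤ H.degree v := by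
  rw [← SimpleGraph.card_neighborFinset_eq_degree, ← SimpleGraph.card_neighborFinset_eq_degree,
    ← Finset.card_union_of_disjoint]
  · apply Finset.card_le_card
    intro x hx
    rw [Finset.mem_union] at hx
    rw [SimpleGraph.mem_neighborFinset]
    rcases hx with hx | hx
    · rw [SimpleGraph.mem_neighborFinset] at hx
      exact hle hx
    · exact (hs x hx).1
  · rw [Finset.disjoint_left]
    intro x hx hx'
    rw [SimpleGraph.mem_neighborFinset] at hx
    exact (hs x hx').2 hx

theorem wt_ge [Fintype V] {H H' : SimpleGraph V} (hle : H' ≤ H) (v : V) (hv : H'.degree v ≠ 0)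
    (s : Finset V) (hs : ∀ x ∈ s, H.Adj v x ∧ ¬ H'.Adj v x) : s.card ≤ wt H H' v := by
  have := degree_lt hle v s hs
  unfold wt
  rw [if_neg hv]
  omega

theorem adj_degree [Fintype V] {H : SimpleGraph V} {x y : V} (h : H.Adj x y) :
    H.degree x ≠ 0 := by
  have : 0 < H.degree x := (SimpleGraph.degree_pos_iff_exists_adj _ _).2 ⟨y, h⟩
  omega

/-- weight of a triangle -/
theorem wt_tri [Fintype V] {H H' : SimpleGraph V} (hle : H' ≤ H)
    (htf : ∀ x y z, H'.Adj x y → H'.Adj y z → H'.Adj x z → False) {x y z : V}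
    (hxy : H.Adj x y) (hyz : H.Adj y z) (hxz : H.Adj x z)
    (hs : H'.degree x ≠ 0 ∨ H'.degree y ≠ 0 ∨ H'.degree z ≠ 0) :
    2 ≤ wt H H' x + wt H H' y + wt H H' z := by
  have e1 : ∀ {u v : V}, H'.degree u ≠ 0 → H.Adj u v → ¬ H'.Adj u v → 1 ≤ wt H H' u := by
    intro u v hu h h'
    have := wt_ge hle u hu {v} (by
      intro w hw
      rw [Finset.mem_singleton] at hw
      subst hw
      exact ⟨h, h'⟩)
    simpa using this
  have e2 : ∀ {u v w : V}, v ≠ w → H'.degree u ≠ 0 → H.Adj u v → ¬ H'.Adj u v → H.Adj u w →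
      ¬ H'.Adj u w → 2 ≤ wt H H' u := by
    intro u v w hvw hu h h' h1 h1'
    have := wt_ge hle u hu {v, w} (by
      intro w' hw
      rw [Finset.mem_insert, Finset.mem_singleton] at hw
      rcases hw with rfl | rfl
      · exact ⟨h, h'⟩
      · exact ⟨h1, h1'⟩)
    rwa [Finset.card_pair hvw] at this
  have key : ∀ {u v w : V}, H.Adj u v → H.Adj v w → H.Adj u w → ¬ H'.Adj u v →
      (H'.degree u ≠ 0 ∨ H'.degree v ≠ 0 ∨ H'.degree w ≠ 0) →
      2 ≤ wt H H' u + wt H H' v + wt H H' w := by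
    intro u v w huv hvw huw hn hd
    have n1 : ∀ {p q : V}, H'.degree p = 0 → ¬ H'.Adj p q := fun h h' => adj_degree h' h
    have n2 : ∀ {p q : V}, H'.degree q = 0 → ¬ H'.Adj p q := fun h h' => adj_degree h'.symm h
    have hn' : ¬ H'.Adj v u := fun h => hn h.symm
    by_cases hu : H'.degree u = 0
    · by_cases hv : H'.degree v = 0
      · have hw : H'.degree w ≠ 0 := by tauto
        have := e2 huv.ne hw huw.symm (n2 hu) hvw.symm (n2 hv)
        omega
      · by_cases hw : H'.degree w = 0
        · have := e2 huw.ne hv huv.symm (n2 hu) hvw (n2 hw)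
          omega
        · have := e1 hv huv.symm hn'
          have := e1 hw huw.symm (n2 hu)
          omega
    · by_cases hv : H'.degree v = 0
      · by_cases hw : H'.degree w = 0
        · have := e2 hvw.ne hu huv (n2 hv) huw (n2 hw)
          omega
        · have := e1 hu huv hn
          have := e1 hw hvw.symm (n2 hv)
          omega
      · have := e1 hu huv hn
        have := e1 hv huv.symm hn'
        omega
  by_cases h1 : H'.Adj x y
  · by_cases h2 : H'.Adj y z
    · have h3 : ¬ H'.Adj x z := fun h3 => htf x y z h1 h2 h3
      have := key hxz hyz.symm hxy h3 (by tauto)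
      omega
    · have := key hyz hxz.symm hxy.symm h2 (by tauto)
      omega
  · exact key hxy hyz hxz h1 hs

theorem leaf [Fintype V] (H : SimpleGraph V) (a b : V) (hab : a ≠ b)
    (ha : H.degree a = 0) (hb : H.degree b = 0) (hP : excess H ≤ 9)
    (hr : (∃ C : Finset V, (∀ v ∈ C, 4 ≤ H.degree v) ∧ excess H < C.card + 6) ∨
      (excess H ≤ 7 ∧ ∃ x y z, H.Adj x y ∧ H.Adj y z ∧ H.Adj x z ∧
        (Fintype.card V ≤ 10 ∨ (Fintype.card V = 11 ∧
          (3 ≤ H.degree x ∨ 3 ≤ H.degree y ∨ 3 ≤ H.degree z)))) ∨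
      (Fintype.card V ≤ 10 ∧ ∃ x y z x' y' z', H.Adj x y ∧ H.Adj y z ∧ H.Adj x z ∧
        H.Adj x' y' ∧ H.Adj y' z' ∧ H.Adj x' z' ∧
        Disjoint ({x, y, z} : Finset V) {x', y', z'}) ∨
      Fintype.card V ≤ 7) : H.IsPlanar := by
  refine ⟨?_, ?_⟩
  · intro hm
    obtain ⟨H', hle, U, hU, hc⟩ := struct5 hm
    have h1 := Finset.card_le_card (supp_subset hU)
    have h2 := wt_sum hle 5 (by omega)
    omega
  · intro hm
    obtain ⟨H', hle, U, hU, -, hc, hd3, htf⟩ := struct33 hm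
    have h1 := Finset.card_le_card (supp_subset hU)
    have h2 := wt_sum hle 3 (by omega)
    simp only [SimpleGraph.card_neighborFinset_eq_degree] at hd3
    have hdle : ∀ v, H'.degree v ≤ H.degree v := fun v => SimpleGraph.degree_le_of_le hle
    have h3 : 2 * H'.edgeFinset.card ≤ 3 * (supp H').card := by
      rw [← SimpleGraph.sum_degrees_eq_twice_card_edges, supp, Finset.card_filter,
        Finset.mul_sum]
      apply Finset.sum_le_sum
      intro v _
      have := hd3 v
      split_ifs <;> omega
    have h6 : 6 ≤ (supp H').card := by omega
    have hnot : ∀ t : Finset V, (∀ v ∈ t, H'.degree v = 0) → t.card + (supp H').card ≤ Fintype.card V := by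
      intro t ht
      rw [← Finset.card_union_of_disjoint, ← Finset.card_univ]
      · exact Finset.card_le_card (Finset.subset_univ _)
      · rw [Finset.disjoint_left]
        intro x hx hx'
        simp only [supp, Finset.mem_filter] at hx'
        exact hx'.2 (ht x hx)
    have ha' : H'.degree a = 0 := by have := hdle a; omega
    have hb' : H'.degree b = 0 := by have := hdle b; omega
    have hab2 : 2 + (supp H').card ≤ Fintype.card V := by
      have := hnot {a, b} (by
        intro v hv
        rw [Finset.mem_insert, Finset.mem_singleton] at hv
        rcases hv with rfl | rfl <;> assumption)
      rwa [Finset.card_pair hab] at this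
    have hsub : ∀ t : Finset V, ∑ v ∈ t, wt H H' v ≤ ∑ v, wt H H' v := fun t =>
      Finset.sum_le_sum_of_subset (Finset.subset_univ _)
    have tri3 : ∀ {x y z : V}, H.Adj x y → H.Adj y z → H.Adj x z →
        ∑ v ∈ {x, y, z}, wt H H' v = wt H H' x + wt H H' y + wt H H' z := by
      intro x y z hxy hyz hxz
      rw [Finset.sum_insert, Finset.sum_pair hyz.ne, add_assoc]
      simp [hxy.ne, hxz.ne]
    -- a triangle outside the support
    have out : ∀ {x y z : V}, H.Adj x y → H.Adj y z → H.Adj x z →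
        ¬ (H'.degree x ≠ 0 ∨ H'.degree y ≠ 0 ∨ H'.degree z ≠ 0) →
        5 + (supp H').card ≤ Fintype.card V ∧ (({a, b, x, y, z} : Finset V).card = 5) ∧
          ∀ v ∈ ({a, b, x, y, z} : Finset V), H'.degree v = 0 := by
      intro x y z hxy hyz hxz hn
      push Not at hn
      have d1 := adj_degree hxy
      have d2 := adj_degree hyz
      have d3 := adj_degree hxz.symm
      have c5 : ({a, b, x, y, z} : Finset V).card = 5 := by
        rw [Finset.card_insert_of_notMem, Finset.card_insert_of_notMem, Finset.card_insert_of_notMem,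
          Finset.card_pair hyz.ne]
        · simp [hxy.ne, hxz.ne]
        · simp only [Finset.mem_insert, Finset.mem_singleton, not_or]
          refine ⟨?_, ?_, ?_⟩ <;> rintro rfl <;> contradiction
        · simp only [Finset.mem_insert, Finset.mem_singleton, not_or]
          refine ⟨hab, ?_, ?_, ?_⟩ <;> rintro rfl <;> contradiction
      have h0 : ∀ v ∈ ({a, b, x, y, z} : Finset V), H'.degree v = 0 := by
        intro v hv
        simp only [Finset.mem_insert, Finset.mem_singleton] at hv
        rcases hv with rfl | rfl | rfl | rfl | rfl
        exacts [ha', hb', hn.1, hn.2.1, hn.2.2]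
      refine ⟨?_, c5, h0⟩
      have := hnot _ h0
      omega
    rcases hr with ⟨C, hC, hlt⟩ | ⟨hP7, x, y, z, hxy, hyz, hxz, hN⟩ |
      ⟨hN, x, y, z, x', y', z', hxy, hyz, hxz, hxy', hyz', hxz', hdis⟩ | hN
    · have : C.card ≤ ∑ v ∈ C, wt H H' v := by
        rw [Finset.card_eq_sum_ones]
        apply Finset.sum_le_sum
        intro v hv
        have := hC v hv
        have := hd3 v
        unfold wt
        split_ifs <;> omega
      have := hsub C
      omega
    · have := hsub {x, y, z}
      rw [tri3 hxy hyz hxz] at this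
      by_cases hn : H'.degree x ≠ 0 ∨ H'.degree y ≠ 0 ∨ H'.degree z ≠ 0
      · have := wt_tri hle htf hxy hyz hxz hn
        omega
      · obtain ⟨o1, o2, o3⟩ := out hxy hyz hxz hn
        rcases hN with hN | ⟨hN, hdeg⟩
        · omega
        · -- all other vertices have degree three in the subgraph
          have hs6 : (supp H').card = 6 := by omega
          have hdeg2 : ∀ {u v w : V}, H.Adj u v → H.Adj u w → v ≠ w → 2 ≤ H.degree u := by
            intro u v w huv huw hvw
            have := Finset.card_le_card (s := {v, w}) (t := H.neighborFinset u) (by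
              intro p hp
              rw [Finset.mem_insert, Finset.mem_singleton] at hp
              rw [SimpleGraph.mem_neighborFinset]
              rcases hp with rfl | rfl <;> assumption)
            rwa [Finset.card_pair hvw, SimpleGraph.card_neighborFinset_eq_degree] at this
          have dx := hdeg2 hxy hxz hyz.ne
          have dy := hdeg2 hxy.symm hyz hxz.ne
          have dz := hdeg2 hxz.symm hyz.symm hxy.ne
          have hall : ∀ v, v ∉ ({a, b, x, y, z} : Finset V) → v ∈ supp H' := by
            intro v hv
            by_contra hvs
            have hv0 : H'.degree v = 0 := by
              by_contra h
              exact hvs (by simp [supp, h])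
            have := hnot (insert v {a, b, x, y, z}) (by
              intro u hu
              rw [Finset.mem_insert] at hu
              rcases hu with rfl | hu
              · exact hv0
              · exact o3 u hu)
            rw [Finset.card_insert_of_notMem hv] at this
            omega
          have hthree : ∀ v ∈ supp H', 3 ≤ H'.degree v := by
            intro v hv
            by_contra hlt
            push Not at hlt
            have hs : ∑ u ∈ supp H', H'.degree u < ∑ u ∈ supp H', 3 :=
              Finset.sum_lt_sum (fun u _ => hd3 u) ⟨v, hv, hlt⟩
            have hs2 : ∑ u ∈ supp H', H'.degree u = ∑ u, H'.degree u := by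
              apply Finset.sum_subset (Finset.subset_univ _)
              intro u _ hu
              by_contra h
              exact hu (by simp [supp, h])
            rw [hs2, SimpleGraph.sum_degrees_eq_twice_card_edges, Finset.sum_const, smul_eq_mul] at hs
            omega
          have hpar : excess H + 18 = ∑ v, H.degree v := by
            have e : ∀ v, H.degree v = (H.degree v - 2) + (if v ∈ ({a, b} : Finset V)ᶜ then 2 else 0) := by
              intro v
              simp only [Finset.mem_compl, Finset.mem_insert, Finset.mem_singleton, not_or]
              split_ifs with hv
              · have : 2 ≤ H.degree v := by
                  by_cases hx : v ∈ ({a, b, x, y, z} : Finset V)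
                  · simp only [Finset.mem_insert, Finset.mem_singleton] at hx
                    rcases hx with rfl | rfl | rfl | rfl | rfl <;> tauto
                  · have := hthree v (hall v hx)
                    have := hdle v
                    omega
                omega
              · have : v = a ∨ v = b := by tauto
                rcases this with rfl | rfl <;> omega
            rw [Finset.sum_congr rfl fun v _ => e v, Finset.sum_add_distrib, excess,
              Finset.sum_ite_mem, Finset.univ_inter, Finset.sum_const, Finset.card_compl,
              Finset.card_pair hab, hN, smul_eq_mul]
          rw [SimpleGraph.sum_degrees_eq_twice_card_edges] at hpar
          push Not at hn
          have w1 : wt H H' x = H.degree x - 2 := if_pos hn.1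
          have w2 : wt H H' y = H.degree y - 2 := if_pos hn.2.1
          have w3 : wt H H' z = H.degree z - 2 := if_pos hn.2.2
          omega
    · have hs := hsub ({x, y, z} ∪ {x', y', z'})
      rw [Finset.sum_union hdis, tri3 hxy hyz hxz, tri3 hxy' hyz' hxz'] at hs
      have n1 : H'.degree x ≠ 0 ∨ H'.degree y ≠ 0 ∨ H'.degree z ≠ 0 := by
        by_contra hn
        have := (out hxy hyz hxz hn).1
        omega
      have n2 : H'.degree x' ≠ 0 ∨ H'.degree y' ≠ 0 ∨ H'.degree z' ≠ 0 := by
        by_contra hn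
        have := (out hxy' hyz' hxz' hn).1
        omega
      have := wt_tri hle htf hxy hyz hxz n1
      have := wt_tri hle htf hxy' hyz' hxz' n2
      omega
    · omega

end TApx

namespace TApx

/-- Evaluate a natural number before passing it on. -/
def force (n : ℕ) (f : ℕ → Bool) : Bool :=
  Nat.casesOn (motive := fun _ => Bool) n (f 0) (fun m => f (Nat.succ m))

def forceL : List ℕ → (List ℕ → Bool) → Bool
  | [], k => k []
  | a :: t, k => force a fun c => forceL t fun l => k (c :: l)

/-- Number of ones among the lowest fourteen binary digits. -/
def pop (m : ℕ) : ℕ := ((m * 35185445863425) &&& 76861433640456465) % 15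

def bit (m i : ℕ) : Bool := Nat.testBit m i

/-- rule T -/
def anyTri (N H X : ℕ) : List ℕ → Bool
  | [] => false
  | t :: ts => (Nat.beq (t &&& X) 0 && (Nat.ble N 10 || !(Nat.beq (t &&& H) 0))) || anyTri N H X ts

def anyDisj (X : ℕ) : List ℕ → Bool
  | [] => false
  | t :: ts => Nat.beq (t &&& X) 0 || anyDisj X ts

def anyTwo (X : ℕ) (all : List ℕ) : List ℕ → Bool
  | [] => false
  | t :: ts => (Nat.beq (t &&& X) 0 && anyDisj (X ||| t) all) || anyTwo X all ts

def goodPair (N nd a ra b rb : ℕ) (tris : List ℕ) : Bool :=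
  force (2 ^ a ||| 2 ^ b) fun X =>
  force (ra &&& rb) fun I =>
  force (ra ||| rb ||| X) fun U =>
  force (pop ((I >>> nd) <<< nd) + (cond (bit ra b) 2 0) + N + nd) fun M =>
  Nat.ble M 21 &&
   (Nat.blt (M + pop (U % 2 ^ nd)) (nd + 18) ||
    ((Nat.ble M 19 &&
      (force ((2 ^ nd - 1) ^^^ ((2 ^ nd - 1) &&& I)) fun H1 =>
       force (((2 ^ N - 1) ^^^ (2 ^ nd - 1)) ^^^ (((2 ^ N - 1) ^^^ (2 ^ nd - 1)) &&& U)) fun H2 =>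
        anyTri N (H1 ||| H2) X tris)) ||
     (Nat.ble N 10 && anyTwo X tris tris)))

def goodWith (N nd a ra : ℕ) (tris : List ℕ) : List (ℕ × ℕ) → Bool
  | [] => false
  | (b, rb) :: rows => (Nat.blt b nd && !(Nat.beq a b) && goodPair N nd a ra b rb tris) || goodWith N nd a ra tris rows

def good (N nd : ℕ) (tris : List ℕ) : List (ℕ × ℕ) → Bool
  | [] => false
  | (a, ra) :: rows => (Nat.blt a nd && goodWith N nd a ra tris rows) || good N nd tris rows

def known (v : ℕ) : List (ℕ × ℕ) → ℕ → (ℕ → Bool) → Bool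
  | [], acc, k => k acc
  | (u, ru) :: rows, acc, k =>
    cond (bit ru v) (force (acc ||| 2 ^ u) fun acc' => known v rows acc' k) (known v rows acc k)

/-- all triangle masks through the edge with mask `e`, third vertex in the mask `W` -/
def thirds (e W : ℕ) : ℕ → List ℕ → (List ℕ → Bool) → Bool
  | 0, acc, k => k acc
  | n + 1, acc, k => cond (bit W n) (force (e ||| 2 ^ n) fun t => thirds e W n (t :: acc) k)
      (thirds e W n acc k)

def addTris (N v r : ℕ) : List (ℕ × ℕ) → List ℕ → (List ℕ → Bool) → Bool
  | [], acc, k => k acc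
  | (u, ru) :: rows, acc, k =>
    cond (bit r u) (thirds (2 ^ v ||| 2 ^ u) (r &&& ru) N acc fun acc' => addTris N v r rows acc' k)
      (addTris N v r rows acc k)

def filt (v : ℕ) : List (List ℕ) → List (List ℕ) → (List (List ℕ) → Bool) → Bool
  | [], acc, k => k acc
  | C :: Cs, acc, k => forceL (C.filter fun i => !(Nat.beq i v)) fun C' => filt v Cs (C' :: acc) k

def consNE (C : List ℕ) (acc : List (List ℕ)) : List (List ℕ) :=
  match C with
  | [] => acc
  | a :: t => (a :: t) :: acc

def splitC (d : ℕ) (k : ℕ → List ℕ → List ℕ → Bool) : List ℕ → ℕ → List ℕ → Bool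
  | [], r, pre => k r pre []
  | i :: t, r, pre => k r pre (i :: t) &&
      (force (r ||| 2 ^ i) fun r' => Nat.blt d (pop r') || 
        forceL (pre ++ [i]) fun pre' => splitC d k t r' pre')

def branch (d : ℕ) (k : ℕ → List (List ℕ) → Bool) : List (List ℕ) → ℕ → List (List ℕ) → Bool
  | [], r, acc => k r acc
  | C :: Cs, r, acc => splitC d (fun r' p s => branch d k Cs r' (consNE p (consNE s acc))) C r []

def countBits (l : ℕ) : List (ℕ × ℕ) → ℕ
  | [] => 0
  | (_, r) :: rows => cond (bit r l) (Nat.succ (countBits l rows)) (countBits l rows)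

def pick (nd : ℕ) (rows : List (ℕ × ℕ)) : List (List ℕ) → ℕ → ℕ → (ℕ → Bool) → Bool
  | [], v, _, k => k v
  | C :: Cs, v, s, k =>
    force (C.headD 0) fun l =>
    force ((cond (Nat.blt l nd) 0 100) + countBits l rows + 20 * C.length) fun s' =>
      cond (Nat.blt s' s) (pick nd rows Cs l s' k) (pick nd rows Cs v s k)

def search (N nd : ℕ) : ℕ → List (ℕ × ℕ) → List ℕ → List (List ℕ) → Bool
  | 0, _, _, _ => false
  | f + 1, rows, tris, cls =>
    good N nd tris rows ||
    (pick nd rows cls 0 100000 fun v => Nat.blt v N &&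
      force (cond (Nat.blt v nd) 4 3) fun d =>
      known v rows 0 fun r0 =>
      filt v cls [] fun cls' =>
      branch d (fun r ncls =>
        (!(Nat.beq (pop r) d)) ||
        addTris N v r rows tris fun tris' => search N nd f ((v, r) :: rows) tris' ncls) cls' r0 [])

def run (N nd : ℕ) : Bool :=
  search N nd (N+1) [] [] (consNE (List.range nd) (consNE ((List.range N).filter fun i => Nat.ble nd i) []))

end TApx

namespace TApx

open Classical

variable {V V' W : Type*}

theorem force_eq (n : ℕ) (f : ℕ → Bool) : force n f = f n := by
  cases n <;> rfl

theorem forceL_eq (l : List ℕ) (k : List ℕ → Bool) : forceL l k = k l := by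
  induction l generalizing k with
  | nil => rfl
  | cons a t ih => simp [forceL, force_eq, ih]

theorem pop_small : ∀ m < 2048, pop m = ∑ j ∈ Finset.range 11, (m.testBit j).toNat := by
  decide +kernel

theorem pop_eq {N : ℕ} (hN : N ≤ 11) (m : ℕ) (hm : ∀ j, m.testBit j = true → j < N) :
    pop m = (Finset.univ.filter fun j : Fin N => m.testBit j = true).card := by
  have hlt : m < 2 ^ 11 := by
    apply Nat.lt_pow_two_of_testBit
    intro i hi
    by_contra h
    have := hm i (by simpa using h)
    omega
  rw [pop_small m hlt, Finset.card_filter]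
  have h1 : ∑ j ∈ Finset.range 11, (m.testBit j).toNat = ∑ j ∈ Finset.range N, (m.testBit j).toNat := by
    symm
    apply Finset.sum_subset
    · intro x hx
      rw [Finset.mem_range] at hx ⊢
      omega
    · intro x _ hx
      rw [Finset.mem_range] at hx
      cases h : m.testBit x with
      | false => rfl
      | true => exact absurd (hm x h) hx
  rw [h1, Finset.sum_range]
  apply Finset.sum_congr rfl
  intro j _
  cases h : m.testBit j.1 <;> simp

/-- Deleting all edges at `a` and `b`. -/
def del (G : SimpleGraph V) (a b : V) : SimpleGraph V where
  Adj x y := G.Adj x y ∧ x ≠ a ∧ x ≠ b ∧ y ≠ a ∧ y ≠ b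
  symm := ⟨fun _ _ h => ⟨h.1.symm, h.2.2.2.1, h.2.2.2.2, h.2.1, h.2.2.1⟩⟩
  loopless := ⟨fun _ h => h.1.ne rfl⟩

theorem del_adj {G : SimpleGraph V} {a b x y : V} :
    (del G a b).Adj x y ↔ G.Adj x y ∧ x ≠ a ∧ x ≠ b ∧ y ≠ a ∧ y ≠ b := Iff.rfl

theorem beq_iff {m n : ℕ} : Nat.beq m n = true ↔ m = n :=
  ⟨Nat.eq_of_beq_eq_true, fun h => by subst h; exact Nat.beq_refl m⟩

def TA (G : SimpleGraph V) : Prop := ∃ a b, (del G a b).IsPlanar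

theorem TA.iso {G : SimpleGraph V} {G' : SimpleGraph V'} (e : V ≃ V')
    (he : ∀ x y, G.Adj x y ↔ G'.Adj (e x) (e y)) (h : TA G') : TA G := by
  obtain ⟨a, b, h1, h2⟩ := h
  have key : ∀ x y, (del G (e.symm a) (e.symm b)).Adj x y → (del G' a b).Adj (e x) (e y) := by
    rintro x y ⟨h, p, q, r, s⟩
    refine ⟨(he x y).1 h, ?_, ?_, ?_, ?_⟩ <;> rintro rfl <;> simp_all
  exact ⟨e.symm a, e.symm b, fun h => h1 (minor_image e e.injective key h),
    fun h => h2 (minor_image e e.injective key h)⟩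

def nadj {N : ℕ} (G : SimpleGraph (Fin N)) (i j : ℕ) : Prop :=
  ∃ (hi : i < N) (hj : j < N), G.Adj ⟨i, hi⟩ ⟨j, hj⟩

theorem nadj_fin {N : ℕ} (G : SimpleGraph (Fin N)) (i j : Fin N) : nadj G i j ↔ G.Adj i j := by
  constructor
  · rintro ⟨_, _, h⟩
    exact h
  · intro h
    exact ⟨i.2, j.2, h⟩

theorem nadj.symm {N : ℕ} {G : SimpleGraph (Fin N)} {i j : ℕ} (h : nadj G i j) : nadj G j i := by
  obtain ⟨a, b, h⟩ := h
  exact ⟨b, a, h.symm⟩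

def RowOK {N : ℕ} (G : SimpleGraph (Fin N)) (p : ℕ × ℕ) : Prop :=
  p.1 < N ∧ ∀ j, p.2.testBit j = true ↔ nadj G p.1 j

def DegOK {N : ℕ} (nd : ℕ) (G : SimpleGraph (Fin N)) : Prop :=
  ∀ v : Fin N, G.degree v = if v.1 < nd then 4 else 3

def TriOK (rows : List (ℕ × ℕ)) (t : ℕ) : Prop :=
  ∃ u ru w rw n, (u, ru) ∈ rows ∧ (w, rw) ∈ rows ∧ ru.testBit w = true ∧ ru.testBit n = true ∧
    rw.testBit n = true ∧ t = 2 ^ u ||| 2 ^ w ||| 2 ^ n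

def IsTri {N : ℕ} (G : SimpleGraph (Fin N)) (t : ℕ) : Prop :=
  ∃ x y z : Fin N, G.Adj x y ∧ G.Adj y z ∧ G.Adj x z ∧
    ∀ j, t.testBit j = true ↔ j = x.1 ∨ j = y.1 ∨ j = z.1

theorem testBit_pow (i j : ℕ) : (2 ^ i).testBit j = true ↔ j = i := by
  rw [Nat.testBit_two_pow]
  simp [eq_comm]

theorem TriOK.isTri {N : ℕ} {G : SimpleGraph (Fin N)} {rows : List (ℕ × ℕ)} {t : ℕ}
    (h : TriOK rows t) (hr : ∀ p ∈ rows, RowOK G p) : IsTri G t := by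
  obtain ⟨u, ru, w, rw', n, h1, h2, h3, h4, h5, rfl⟩ := h
  have r1 := hr _ h1
  have r2 := hr _ h2
  obtain ⟨a1, b1, c1⟩ := (r1.2 w).1 h3
  obtain ⟨a2, b2, c2⟩ := (r1.2 n).1 h4
  obtain ⟨a3, b3, c3⟩ := (r2.2 n).1 h5
  refine ⟨⟨u, a1⟩, ⟨w, b1⟩, ⟨n, b2⟩, c1, c3, c2, ?_⟩
  intro j
  simp only [Nat.testBit_or, Bool.or_eq_true, testBit_pow]
  tauto

theorem and_zero {s t : ℕ} (h : s &&& t = 0) (j : ℕ) (hs : s.testBit j = true) :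
    t.testBit j = false := by
  have := congrArg (fun m => m.testBit j) h
  simpa [hs] using this

theorem and_ne_zero {s t : ℕ} (h : s &&& t ≠ 0) : ∃ j, s.testBit j = true ∧ t.testBit j = true := by
  by_contra hcon
  push Not at hcon
  apply h
  apply Nat.eq_of_testBit_eq
  intro j
  have := hcon j
  cases h1 : s.testBit j <;> simp_all

theorem anyTri_sound {N H X : ℕ} {tris : List ℕ} (h : anyTri N H X tris = true) :
    ∃ t ∈ tris, t &&& X = 0 ∧ (N ≤ 10 ∨ t &&& H ≠ 0) := by
  induction tris with
  | nil => simp [anyTri] at h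
  | cons t ts ih =>
    simp only [anyTri, Bool.or_eq_true, Bool.and_eq_true, beq_iff] at h
    rcases h with ⟨h1, h2⟩ | h
    · refine ⟨t, by simp, h1, ?_⟩
      rcases h2 with h2 | h2
      · exact Or.inl (Nat.le_of_ble_eq_true h2)
      · right
        intro h3
        rw [h3] at h2
        exact absurd h2 (by decide)
    · obtain ⟨t', h1, h2⟩ := ih h
      exact ⟨t', by simp [h1], h2⟩

theorem anyDisj_sound {X : ℕ} {tris : List ℕ} (h : anyDisj X tris = true) :
    ∃ t ∈ tris, t &&& X = 0 := by
  induction tris with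
  | nil => simp [anyDisj] at h
  | cons t ts ih =>
    simp only [anyDisj, Bool.or_eq_true, beq_iff] at h
    rcases h with h1 | h
    · exact ⟨t, by simp, h1⟩
    · obtain ⟨t', h1, h2⟩ := ih h
      exact ⟨t', by simp [h1], h2⟩

theorem anyTwo_sound {X : ℕ} {all tris : List ℕ} (h : anyTwo X all tris = true) :
    ∃ t ∈ tris, ∃ t' ∈ all, t &&& X = 0 ∧ t' &&& (X ||| t) = 0 := by
  induction tris with
  | nil => simp [anyTwo] at h
  | cons t ts ih =>
    simp only [anyTwo, Bool.or_eq_true, Bool.and_eq_true, beq_iff] at h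
    rcases h with ⟨h1, h2⟩ | h
    · obtain ⟨t', h3, h4⟩ := anyDisj_sound h2
      exact ⟨t, by simp, t', h3, h1, h4⟩
    · obtain ⟨t', h1, h2⟩ := ih h
      exact ⟨t', by simp [h1], h2⟩

theorem del_degree [Fintype V] (G : SimpleGraph V) (a b v : V) (hva : v ≠ a) (hvb : v ≠ b)
    (hab : a ≠ b) :
    (del G a b).degree v + (if G.Adj a v then 1 else 0) + (if G.Adj b v then 1 else 0) = G.degree v := by
  have e : G.neighborFinset v = (del G a b).neighborFinset v ∪
      ((if G.Adj a v then {a} else ∅) ∪ (if G.Adj b v then {b} else ∅)) := by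
    ext x
    simp only [Finset.mem_union, SimpleGraph.mem_neighborFinset, del_adj]
    by_cases hxa : x = a
    · subst hxa
      rw [G.adj_comm v x]
      split_ifs <;> simp_all
    · by_cases hxb : x = b
      · subst hxb
        rw [G.adj_comm v x]
        split_ifs <;> simp_all
      · split_ifs <;> simp_all
  rw [← SimpleGraph.card_neighborFinset_eq_degree, ← SimpleGraph.card_neighborFinset_eq_degree, e,
    Finset.card_union_of_disjoint, Finset.card_union_of_disjoint]
  · split_ifs <;> simp [add_assoc]
  · split_ifs <;> simp [hab]
  · rw [Finset.disjoint_left]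
    intro x hx
    simp only [SimpleGraph.mem_neighborFinset, del_adj] at hx
    split_ifs <;> simp_all

theorem del_degree_zero [Fintype V] (G : SimpleGraph V) (a b v : V) (h : v = a ∨ v = b) :
    (del G a b).degree v = 0 := by
  by_contra hne
  have : 0 < (del G a b).degree v := Nat.pos_of_ne_zero hne
  rw [SimpleGraph.degree_pos_iff_exists_adj] at this
  obtain ⟨w, hw⟩ := this
  rcases h with rfl | rfl
  · exact hw.2.1 rfl
  · exact hw.2.2.1 rfl

theorem excess_del {N nd : ℕ} {G : SimpleGraph (Fin N)} (hnd : nd ≤ N) (hG : DegOK nd G) (a b : Fin N)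
    (hab : a ≠ b) (ha : a.1 < nd) (hb : b.1 < nd) :
    excess (del G a b) + 12 = N + nd + (if G.Adj a b then 2 else 0) +
      (Finset.univ.filter fun v : Fin N => nd ≤ v.1 ∧ G.Adj a v ∧ G.Adj b v).card := by
  have key : ∀ v : Fin N, ((del G a b).degree v - 2) + (if G.Adj a v then 1 else 0) +
      (if G.Adj b v then 1 else 0) + (if v = a then 2 else 0) + (if v = b then 2 else 0) =
      1 + (if v.1 < nd then 1 else 0) + (if nd ≤ v.1 ∧ G.Adj a v ∧ G.Adj b v then 1 else 0) +
      (if v = a then (if G.Adj a b then 1 else 0) else 0) +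
      (if v = b then (if G.Adj a b then 1 else 0) else 0) := by
    intro v
    by_cases hva : v = a
    · subst hva
      rw [del_degree_zero G v b v (Or.inl rfl)]
      simp [hab, ha, G.adj_comm b v]
      rw [add_comm]
    · by_cases hvb : v = b
      · subst hvb
        rw [del_degree_zero G a v v (Or.inr rfl)]
        simp [hva, hb]
        rw [add_comm]
      · have h1 := del_degree G a b v hva hvb hab
        rw [hG v] at h1
        by_cases hv : v.1 < nd
        · have : ¬ nd ≤ v.1 := by omega
          simp only [hva, hvb, hv, this, false_and, if_true, if_false] at h1 ⊢
          split_ifs at h1 ⊢ <;> omega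
        · have : nd ≤ v.1 := by omega
          simp only [hva, hvb, hv, this, true_and, if_false] at h1 ⊢
          split_ifs at h1 ⊢ <;> first | omega | tauto
  have hs := Finset.sum_congr (rfl : (Finset.univ : Finset (Fin N)) = Finset.univ) fun v _ => key v
  have dg : ∀ w : Fin N, w.1 < nd → ∑ v, (if G.Adj w v then 1 else 0) = 4 := by
    intro w hw
    have := hG w
    rw [if_pos hw, ← SimpleGraph.card_neighborFinset_eq_degree] at this
    rw [← this, ← Finset.card_filter]
    congr 1
    ext x
    simp
  have hndc : ∑ v : Fin N, (if v.1 < nd then 1 else 0) = nd := by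
    rw [← Finset.sum_range (fun i => if i < nd then 1 else 0), ← Finset.card_filter]
    have : (Finset.range N).filter (fun i => i < nd) = Finset.range nd := by
      ext x
      simp only [Finset.mem_filter, Finset.mem_range]
      omega
    rw [this, Finset.card_range]
  simp only [Finset.sum_add_distrib, dg a ha, dg b hb, hndc, ← Finset.card_filter] at hs
  simp only [Finset.sum_ite_eq', Finset.mem_univ, if_true, Finset.sum_const, Finset.card_univ,
    Fintype.card_fin, smul_eq_mul] at hs
  change excess (del G a b) + _ + _ + _ + _ = _ at hs
  split_ifs at hs ⊢ <;> omega

end TApx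

namespace TApx

open Classical

theorem goodPair_sound {N nd : ℕ} (hN : N ≤ 11) (hnd : nd ≤ N) {G : SimpleGraph (Fin N)}
    (hG : DegOK nd G) {a ra b rb : ℕ} (hra : RowOK G (a, ra)) (hrb : RowOK G (b, rb))
    (ha : a < nd) (hb : b < nd) (hab : a ≠ b) {tris : List ℕ} (ht : ∀ t ∈ tris, IsTri G t)
    (h : goodPair N nd a ra b rb tris = true) : TA G := by
  obtain ⟨haN, hra⟩ := hra
  obtain ⟨hbN, hrb⟩ := hrb
  simp only at haN hbN hra hrb
  have hra' : ∀ v : Fin N, ra.testBit v.1 = true ↔ G.Adj ⟨a, haN⟩ v := fun v =>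
    (hra v).trans (nadj_fin G ⟨a, haN⟩ v)
  have hrb' : ∀ v : Fin N, rb.testBit v.1 = true ↔ G.Adj ⟨b, hbN⟩ v := fun v =>
    (hrb v).trans (nadj_fin G ⟨b, hbN⟩ v)
  have hraN : ∀ j, ra.testBit j = true → j < N := fun j hj => ((hra j).1 hj).2.1
  have hrbN : ∀ j, rb.testBit j = true → j < N := fun j hj => ((hrb j).1 hj).2.1
  have hab' : (⟨a, haN⟩ : Fin N) ≠ ⟨b, hbN⟩ := fun h => hab (congrArg Fin.val h)
  have hex := excess_del hnd hG ⟨a, haN⟩ ⟨b, hbN⟩ hab' ha hb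
  have hS : pop (((ra &&& rb) >>> nd) <<< nd) = (Finset.univ.filter fun v : Fin N =>
      nd ≤ v.1 ∧ G.Adj ⟨a, haN⟩ v ∧ G.Adj ⟨b, hbN⟩ v).card := by
    have hbit : ∀ j, ((((ra &&& rb) >>> nd) <<< nd).testBit j = true ↔
        nd ≤ j ∧ ra.testBit j = true ∧ rb.testBit j = true) := by
      intro j
      simp only [Nat.testBit_shiftLeft, Nat.testBit_shiftRight, Nat.testBit_and, Bool.and_eq_true,
        decide_eq_true_eq, ge_iff_le]
      constructor
      · rintro ⟨h1, h2⟩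
        rw [Nat.add_sub_cancel' h1] at h2
        exact ⟨h1, h2⟩
      · rintro ⟨h1, h2⟩
        rw [Nat.add_sub_cancel' h1]
        exact ⟨h1, h2⟩
    rw [pop_eq hN _ fun j hj => hraN j ((hbit j).1 hj).2.1]
    congr 1
    ext v
    simp only [Finset.mem_filter, Finset.mem_univ, true_and, hbit, hra', hrb']
  rw [← hS] at hex
  have hadj : (if G.Adj ⟨a, haN⟩ ⟨b, hbN⟩ then 2 else 0) = cond (bit ra b) 2 0 := by
    have := hra' ⟨b, hbN⟩
    simp only at this
    unfold bit
    cases hq : ra.testBit b <;> simp [hq] at this <;> simp [this]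
  rw [hadj] at hex
  simp only [goodPair, force_eq, Bool.and_eq_true, Bool.or_eq_true] at h
  obtain ⟨hM, h⟩ := h
  have hM := Nat.le_of_ble_eq_true hM
  have hda : (del G ⟨a, haN⟩ ⟨b, hbN⟩).degree ⟨a, haN⟩ = 0 := del_degree_zero _ _ _ _ (Or.inl rfl)
  have hdb : (del G ⟨a, haN⟩ ⟨b, hbN⟩).degree ⟨b, hbN⟩ = 0 := del_degree_zero _ _ _ _ (Or.inr rfl)
  -- triangles avoiding the two deleted vertices
  have hX : ∀ t ∈ tris, t &&& (2 ^ a ||| 2 ^ b) = 0 → IsTri (del G ⟨a, haN⟩ ⟨b, hbN⟩) t := by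
    intro t htt h0
    obtain ⟨x, y, z, hxy, hyz, hxz, hb⟩ := ht t htt
    have hn : ∀ w : Fin N, t.testBit w.1 = true → w ≠ ⟨a, haN⟩ ∧ w ≠ ⟨b, hbN⟩ := by
      intro w hw
      have h1 := and_zero h0 _ hw
      rw [Nat.testBit_or, Bool.or_eq_false_iff] at h1
      constructor
      · rintro rfl
        have := (testBit_pow a a).2 rfl
        simp_all
      · rintro rfl
        have := (testBit_pow b b).2 rfl
        simp_all
    have hx := hn x ((hb _).2 (by simp))
    have hy := hn y ((hb _).2 (by simp))
    have hz := hn z ((hb _).2 (by simp))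
    exact ⟨x, y, z, ⟨hxy, hx.1, hx.2, hy.1, hy.2⟩, ⟨hyz, hy.1, hy.2, hz.1, hz.2⟩,
      ⟨hxz, hx.1, hx.2, hz.1, hz.2⟩, hb⟩
  refine ⟨⟨a, haN⟩, ⟨b, hbN⟩, leaf _ ⟨a, haN⟩ ⟨b, hbN⟩ hab' hda hdb (by omega) ?_⟩
  rw [Fintype.card_fin]
  rcases h with h | ⟨h, h'⟩ | ⟨h, h'⟩
  · left
    have h := Nat.le_of_ble_eq_true h
    refine ⟨Finset.univ.filter fun v : Fin N => v.1 < nd ∧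
      (ra ||| rb ||| (2 ^ a ||| 2 ^ b)).testBit v.1 = false, ?_, ?_⟩
    · intro v hv
      simp only [Finset.mem_filter, Finset.mem_univ, true_and, Nat.testBit_or,
        Bool.or_eq_false_iff] at hv
      obtain ⟨hv, ⟨h1, h2⟩, h3, h4⟩ := hv
      have n1 : v ≠ ⟨a, haN⟩ := by
        rintro rfl
        rw [(testBit_pow a a).2 rfl] at h3
        exact absurd h3 (by decide)
      have n2 : v ≠ ⟨b, hbN⟩ := by
        rintro rfl
        rw [(testBit_pow b b).2 rfl] at h4
        exact absurd h4 (by decide)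
      have hd := del_degree G ⟨a, haN⟩ ⟨b, hbN⟩ v n1 n2 hab'
      rw [hG v, if_pos hv, if_neg (by rw [← hra', h1]; decide), if_neg (by rw [← hrb', h2]; decide)] at hd
      omega
    · have hpop : pop ((ra ||| rb ||| (2 ^ a ||| 2 ^ b)) % 2 ^ nd) +
          (Finset.univ.filter fun v : Fin N => v.1 < nd ∧
            (ra ||| rb ||| (2 ^ a ||| 2 ^ b)).testBit v.1 = false).card = nd := by
        have hbit : ∀ j, (((ra ||| rb ||| (2 ^ a ||| 2 ^ b)) % 2 ^ nd).testBit j = true ↔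
            j < nd ∧ (ra ||| rb ||| (2 ^ a ||| 2 ^ b)).testBit j = true) := by
          intro j
          rw [Nat.testBit_mod_two_pow, Bool.and_eq_true, decide_eq_true_eq]
        rw [pop_eq hN _ fun j hj => lt_of_lt_of_le ((hbit j).1 hj).1 hnd,
          ← Finset.card_union_of_disjoint]
        · have : ((Finset.univ.filter fun j : Fin N =>
              ((ra ||| rb ||| (2 ^ a ||| 2 ^ b)) % 2 ^ nd).testBit j.1 = true) ∪
              Finset.univ.filter fun v : Fin N => v.1 < nd ∧
              (ra ||| rb ||| (2 ^ a ||| 2 ^ b)).testBit v.1 = false) =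
              Finset.univ.filter fun v : Fin N => v.1 < nd := by
            ext v
            simp only [Finset.mem_union, Finset.mem_filter, Finset.mem_univ, true_and, hbit]
            cases (ra ||| rb ||| (2 ^ a ||| 2 ^ b)).testBit v.1 <;> simp
          rw [this]
          have e : ∑ v : Fin N, (if v.1 < nd then 1 else 0) = nd := by
            rw [← Finset.sum_range (fun i => if i < nd then 1 else 0), ← Finset.card_filter]
            have : (Finset.range N).filter (fun i => i < nd) = Finset.range nd := by
              ext x
              simp only [Finset.mem_filter, Finset.mem_range]
              omega
            rw [this, Finset.card_range]
          rw [Finset.card_filter]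
          exact e
        · rw [Finset.disjoint_left]
          intro v hv hv'
          simp only [Finset.mem_filter, Finset.mem_univ, true_and, hbit] at hv hv'
          rw [hv.2] at hv'
          exact absurd hv'.2 (by decide)
      omega
  · right; left
    have h := Nat.le_of_ble_eq_true h
    obtain ⟨t, htt, h0, h1⟩ := anyTri_sound h'
    obtain ⟨x, y, z, hxy, hyz, hxz, hbits⟩ := hX t htt h0
    refine ⟨by omega, x, y, z, hxy, hyz, hxz, ?_⟩
    by_cases h10 : N ≤ 10
    · exact Or.inl h10
    · right
      refine ⟨by omega, ?_⟩
      obtain ⟨j, hj, hj'⟩ := and_ne_zero (h1.resolve_left h10)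
      have hw : ∀ w : Fin N, j = w.1 → w ≠ ⟨a, haN⟩ → w ≠ ⟨b, hbN⟩ → 3 ≤ (del G ⟨a, haN⟩ ⟨b, hbN⟩).degree w := by
        rintro w rfl n1 n2
        have hd := del_degree G ⟨a, haN⟩ ⟨b, hbN⟩ w n1 n2 hab'
        rw [hG w] at hd
        simp only [Nat.testBit_or, Nat.testBit_xor, Nat.testBit_and, Nat.testBit_two_pow_sub_one] at hj'
        by_cases hwn : w.1 < nd
        · rw [if_pos hwn] at hd
          by_cases c1 : G.Adj ⟨a, haN⟩ w
          · by_cases c2 : G.Adj ⟨b, hbN⟩ w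
            · have e1 := (hra' w).2 c1
              have e2 := (hrb' w).2 c2
              simp [hwn, e1, e2] at hj'
            · rw [if_pos c1, if_neg c2] at hd
              omega
          · rw [if_neg c1] at hd
            split_ifs at hd <;> omega
        · rw [if_neg hwn] at hd
          by_cases c1 : G.Adj ⟨a, haN⟩ w
          · have e1 := (hra' w).2 c1
            simp [hwn, e1] at hj'
          · by_cases c2 : G.Adj ⟨b, hbN⟩ w
            · have e1 := (hrb' w).2 c2
              simp [hwn, e1] at hj'
            · rw [if_neg c1, if_neg c2] at hd
              omega
      rcases (hbits j).1 hj with e | e | e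
      · exact Or.inl (hw x e hxy.2.1 hxy.2.2.1)
      · exact Or.inr (Or.inl (hw y e hyz.2.1 hyz.2.2.1))
      · exact Or.inr (Or.inr (hw z e hyz.2.2.2.1 hyz.2.2.2.2))
  · right; right; left
    have h := Nat.le_of_ble_eq_true h
    refine ⟨h, ?_⟩
    obtain ⟨t, htt, t', htt', h0, h1⟩ := anyTwo_sound h'
    have h2 : t' &&& (2 ^ a ||| 2 ^ b) = 0 := by
      apply Nat.eq_of_testBit_eq
      intro j
      rw [Nat.zero_testBit, Nat.testBit_and]
      cases hj : t'.testBit j with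
      | false => rfl
      | true =>
        have := and_zero h1 j hj
        rw [Nat.testBit_or, Bool.or_eq_false_iff] at this
        rw [this.1]
        rfl
    obtain ⟨x, y, z, hxy, hyz, hxz, hbits⟩ := hX t htt h0
    obtain ⟨x', y', z', hxy', hyz', hxz', hbits'⟩ := hX t' htt' h2
    refine ⟨x, y, z, x', y', z', hxy, hyz, hxz, hxy', hyz', hxz', ?_⟩
    rw [Finset.disjoint_left]
    intro w hw hw'
    simp only [Finset.mem_insert, Finset.mem_singleton] at hw hw'
    have b1 : t.testBit w.1 = true := (hbits _).2 (by
      rcases hw with rfl | rfl | rfl <;> simp)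
    have b2 : t'.testBit w.1 = true := (hbits' _).2 (by
      rcases hw' with rfl | rfl | rfl <;> simp)
    have := and_zero h1 _ b2
    rw [Nat.testBit_or, b1] at this
    simp at this

theorem goodWith_sound {N nd : ℕ} (hN : N ≤ 11) (hnd : nd ≤ N) {G : SimpleGraph (Fin N)}
    (hG : DegOK nd G) {a ra : ℕ} (hra : RowOK G (a, ra))
    (ha : a < nd) {tris : List ℕ} (ht : ∀ t ∈ tris, IsTri G t) {rows : List (ℕ × ℕ)}
    (hr : ∀ p ∈ rows, RowOK G p)
    (h : goodWith N nd a ra tris rows = true) : TA G := by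
  induction rows with
  | nil => simp [goodWith] at h
  | cons p rows ih =>
    obtain ⟨b, rb⟩ := p
    simp only [goodWith, Bool.or_eq_true, Bool.and_eq_true] at h
    rcases h with ⟨⟨h1, h2⟩, h3⟩ | h
    · refine goodPair_sound hN hnd hG hra (hr _ (by simp)) ha (Nat.le_of_ble_eq_true h1) ?_ ht h3
      rintro rfl
      rw [beq_iff.2 rfl] at h2
      exact absurd h2 (by decide)
    · exact ih (fun p hp => hr p (by simp [hp])) h

theorem good_sound {N nd : ℕ} (hN : N ≤ 11) (hnd : nd ≤ N) {G : SimpleGraph (Fin N)}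
    (hG : DegOK nd G) {tris : List ℕ} (ht : ∀ t ∈ tris, IsTri G t) {rows : List (ℕ × ℕ)}
    (hr : ∀ p ∈ rows, RowOK G p)
    (h : good N nd tris rows = true) : TA G := by
  induction rows with
  | nil => simp [good] at h
  | cons p rows ih =>
    obtain ⟨a, ra⟩ := p
    simp only [good, Bool.or_eq_true, Bool.and_eq_true] at h
    rcases h with ⟨h1, h3⟩ | h
    · exact goodWith_sound hN hnd hG (hr _ (by simp)) (Nat.le_of_ble_eq_true h1) ht
        (fun p hp => hr p (by simp [hp])) h3
    · exact ih (fun p hp => hr p (by simp [hp])) h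

end TApx

namespace TApx

open Classical

theorem known_sound (v : ℕ) (rows : List (ℕ × ℕ)) (acc : ℕ) (k : ℕ → Bool) :
    ∃ r, known v rows acc k = k r ∧ ∀ j, r.testBit j = true ↔
      acc.testBit j = true ∨ ∃ ru, (j, ru) ∈ rows ∧ ru.testBit v = true := by
  induction rows generalizing acc with
  | nil => exact ⟨acc, rfl, by simp⟩
  | cons p rows ih =>
    obtain ⟨u, ru⟩ := p
    simp only [known, bit, force_eq]
    cases hb : ru.testBit v with
    | true =>
      obtain ⟨r, h1, h2⟩ := ih (acc ||| 2 ^ u)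
      refine ⟨r, h1, ?_⟩
      intro j
      rw [h2, Nat.testBit_or, Bool.or_eq_true, testBit_pow]
      constructor
      · rintro ((h | rfl) | ⟨r', h, h'⟩)
        · exact Or.inl h
        · exact Or.inr ⟨ru, by simp, hb⟩
        · exact Or.inr ⟨r', by simp [h], h'⟩
      · rintro (h | ⟨r', h, h'⟩)
        · exact Or.inl (Or.inl h)
        · rw [List.mem_cons] at h
          rcases h with h | h
          · rw [Prod.mk.injEq] at h
            exact Or.inl (Or.inr h.1)
          · exact Or.inr ⟨r', h, h'⟩
    | false =>
      obtain ⟨r, h1, h2⟩ := ih acc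
      refine ⟨r, h1, ?_⟩
      intro j
      rw [h2]
      constructor
      · rintro (h | ⟨r', h, h'⟩)
        · exact Or.inl h
        · exact Or.inr ⟨r', by simp [h], h'⟩
      · rintro (h | ⟨r', h, h'⟩)
        · exact Or.inl h
        · rw [List.mem_cons] at h
          rcases h with h | h
          · rw [Prod.mk.injEq] at h
            rw [h.2, hb] at h'
            exact absurd h' (by decide)
          · exact Or.inr ⟨r', h, h'⟩

theorem thirds_sound (e W n : ℕ) (acc : List ℕ) (k : List ℕ → Bool) :
    ∃ l, thirds e W n acc k = k l ∧ ∀ t ∈ l, t ∈ acc ∨ ∃ i, W.testBit i = true ∧ t = e ||| 2 ^ i := by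
  induction n generalizing acc with
  | zero => exact ⟨acc, rfl, fun t ht => Or.inl ht⟩
  | succ n ih =>
    simp only [thirds, bit, force_eq]
    cases hb : W.testBit n with
    | true =>
      obtain ⟨l, h1, h2⟩ := ih ((e ||| 2 ^ n) :: acc)
      refine ⟨l, h1, ?_⟩
      intro t ht
      rcases h2 t ht with h | h
      · rw [List.mem_cons] at h
        rcases h with rfl | h
        · exact Or.inr ⟨n, hb, rfl⟩
        · exact Or.inl h
      · exact Or.inr h
    | false => exact ih acc

theorem addTris_sound (N v r : ℕ) (rows : List (ℕ × ℕ)) (acc : List ℕ) (k : List ℕ → Bool) :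
    ∃ l, addTris N v r rows acc k = k l ∧ ∀ t ∈ l, t ∈ acc ∨ ∃ u ru i, (u, ru) ∈ rows ∧
      r.testBit u = true ∧ r.testBit i = true ∧ ru.testBit i = true ∧
      t = 2 ^ v ||| 2 ^ u ||| 2 ^ i := by
  induction rows generalizing acc with
  | nil => exact ⟨acc, rfl, fun t ht => Or.inl ht⟩
  | cons p rows ih =>
    obtain ⟨u, ru⟩ := p
    simp only [addTris, bit]
    cases hb : r.testBit u with
    | true =>
      obtain ⟨l1, h1, h2⟩ := thirds_sound (2 ^ v ||| 2 ^ u) (r &&& ru) N acc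
        (fun acc' => addTris N v r rows acc' k)
      obtain ⟨l, h3, h4⟩ := ih l1
      refine ⟨l, h1.trans h3, ?_⟩
      intro t ht
      rcases h4 t ht with h | ⟨u', ru', i, h, h'⟩
      · rcases h2 t h with h | ⟨i, h, h'⟩
        · exact Or.inl h
        · rw [Nat.testBit_and, Bool.and_eq_true] at h
          exact Or.inr ⟨u, ru, i, by simp, hb, h.1, h.2, h'⟩
      · exact Or.inr ⟨u', ru', i, by simp [h], h'⟩
    | false =>
      obtain ⟨l, h3, h4⟩ := ih acc
      refine ⟨l, h3, ?_⟩
      intro t ht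
      rcases h4 t ht with h | ⟨u', ru', i, h, h'⟩
      · exact Or.inl h
      · exact Or.inr ⟨u', ru', i, by simp [h], h'⟩

theorem filt_sound (v : ℕ) (cls acc : List (List ℕ)) (k : List (List ℕ) → Bool) :
    ∃ l, filt v cls acc k = k l ∧ ∀ C, C ∈ l ↔ C ∈ acc ∨ ∃ C0 ∈ cls, C = C0.filter fun i => !(Nat.beq i v) := by
  induction cls generalizing acc with
  | nil => exact ⟨acc, rfl, by simp⟩
  | cons C0 cls ih =>
    simp only [filt, forceL_eq]
    obtain ⟨l, h1, h2⟩ := ih ((C0.filter fun i => !(Nat.beq i v)) :: acc)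
    refine ⟨l, h1, ?_⟩
    intro C
    rw [h2]
    simp only [List.mem_cons, exists_eq_or_imp]
    tauto

theorem pick_sound (nd : ℕ) (rows : List (ℕ × ℕ)) (cls : List (List ℕ)) (v s : ℕ) (k : ℕ → Bool) :
    ∃ w, pick nd rows cls v s k = k w := by
  induction cls generalizing v s with
  | nil => exact ⟨v, rfl⟩
  | cons C Cs ih =>
    simp only [pick, force_eq]
    cases Nat.blt ((bif Nat.blt (C.headD 0) nd then 0 else 100) + countBits (C.headD 0) rows +
      20 * C.length) s with
    | true => exact ih _ _
    | false => exact ih _ _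

theorem mem_consNE {C C' : List ℕ} {acc : List (List ℕ)} (h : C' ∈ consNE C acc) :
    C' = C ∨ C' ∈ acc := by
  cases C with
  | nil => exact Or.inr h
  | cons a t => simpa [consNE] using h

theorem consNE_of_mem {C C' : List ℕ} {acc : List (List ℕ)} (h : C' ∈ acc) :
    C' ∈ consNE C acc := by
  cases C with
  | nil => exact h
  | cons a t => simp [consNE, h]

theorem consNE_self {C : List ℕ} {acc : List (List ℕ)} {j : ℕ} (h : j ∈ C) :
    C ∈ consNE C acc := by
  cases C with
  | nil => simp at h
  | cons a t => simp [consNE]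

theorem splitC_sound {d : ℕ} {k : ℕ → List ℕ → List ℕ → Bool} {S : ℕ → Prop}
    (hS : ∀ m : ℕ, (∀ j, m.testBit j = true → S j) → pop m ≤ d) (p s : List ℕ)
    (hp : ∀ j ∈ p, S j) (r : ℕ) (hr : ∀ j, r.testBit j = true → S j) (pre : List ℕ)
    (h : splitC d k (p ++ s) r pre = true) :
    ∃ r', k r' (pre ++ p) s = true ∧ ∀ j, r'.testBit j = true ↔ r.testBit j = true ∨ j ∈ p := by
  induction p generalizing r pre with
  | nil =>
    refine ⟨r, ?_, by simp⟩
    rw [List.append_nil]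
    cases s with
    | nil => simpa [splitC] using h
    | cons i t =>
      simp only [List.nil_append, splitC, Bool.and_eq_true] at h
      exact h.1
  | cons i t ih =>
    simp only [List.cons_append, splitC, Bool.and_eq_true, force_eq, forceL_eq, Bool.or_eq_true] at h
    have hb : ∀ j, (r ||| 2 ^ i).testBit j = true ↔ r.testBit j = true ∨ j = i := by
      intro j
      rw [Nat.testBit_or, Bool.or_eq_true, testBit_pow]
    have hr' : ∀ j, (r ||| 2 ^ i).testBit j = true → S j := by
      intro j hj
      rcases (hb j).1 hj with hj | rfl
      · exact hr j hj
      · exact hp j (by simp)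
    have h2 : splitC d k (t ++ s) (r ||| 2 ^ i) (pre ++ [i]) = true := by
      rcases h.2 with h' | h'
      · have h3 := Nat.le_of_ble_eq_true h'
        have := hS _ hr'
        omega
      · exact h'
    obtain ⟨r', e1, e2⟩ := ih (fun j hj => hp j (by simp [hj])) _ hr' _ h2
    refine ⟨r', by simpa using e1, ?_⟩
    intro j
    rw [e2, hb, List.mem_cons]
    tauto

theorem branch_sound {d : ℕ} {k : ℕ → List (List ℕ) → Bool} {S : ℕ → Prop}
    (hS : ∀ m : ℕ, (∀ j, m.testBit j = true → S j) → pop m ≤ d) (Cs : List (List ℕ))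
    (hC : ∀ C ∈ Cs, ∃ p s, C = p ++ s ∧ (∀ j ∈ p, S j) ∧ ∀ j ∈ s, ¬ S j)
    (r : ℕ) (hr : ∀ j, r.testBit j = true → S j) (acc : List (List ℕ))
    (h : branch d k Cs r acc = true) :
    ∃ r' cls, k r' cls = true ∧
      (∀ j, r'.testBit j = true ↔ r.testBit j = true ∨ ∃ C ∈ Cs, j ∈ C ∧ S j) ∧
      (∀ C' ∈ cls, C' ∈ acc ∨ ∃ C ∈ Cs, C'.Sublist C ∧ ∀ i ∈ C', ∀ j ∈ C', (S i ↔ S j)) ∧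
      (∀ C' ∈ acc, C' ∈ cls) ∧ (∀ C ∈ Cs, ∀ j ∈ C, ∃ C' ∈ cls, j ∈ C') := by
  induction Cs generalizing r acc with
  | nil =>
    refine ⟨r, acc, h, by simp, fun C' hC' => Or.inl hC', fun _ h => h, by simp⟩
  | cons C Cs ih =>
    simp only [branch] at h
    obtain ⟨p, s, rfl, hp, hs⟩ := hC C (by simp)
    obtain ⟨r1, h1, h2⟩ := splitC_sound hS p s hp r hr [] h
    rw [List.nil_append] at h1
    have hr1 : ∀ j, r1.testBit j = true → S j := by
      intro j hj
      rcases (h2 j).1 hj with hj | hj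
      · exact hr j hj
      · exact hp j hj
    obtain ⟨r', cls, e1, e2, e3, e4, e5⟩ := ih (fun C hC' => hC C (by simp [hC'])) r1 hr1 _ h1
    refine ⟨r', cls, e1, ?_, ?_, ?_, ?_⟩
    · intro j
      rw [e2, h2]
      simp only [List.mem_cons, exists_eq_or_imp, List.mem_append]
      have := hp j
      have := hs j
      tauto
    · intro C' hC'
      rcases e3 C' hC' with h | ⟨C, h, h'⟩
      · rcases mem_consNE h with rfl | h
        · exact Or.inr ⟨_, List.mem_cons_self, List.sublist_append_left _ _,
            fun i hi j hj => ⟨fun _ => hp j hj, fun _ => hp i hi⟩⟩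
        · rcases mem_consNE h with rfl | h
          · exact Or.inr ⟨_, List.mem_cons_self, List.sublist_append_right _ _,
              fun i hi j hj => ⟨fun h => absurd h (hs i hi), fun h => absurd h (hs j hj)⟩⟩
          · exact Or.inl h
      · exact Or.inr ⟨C, by simp [h], h'⟩
    · intro C' hC'
      exact e4 C' (consNE_of_mem (consNE_of_mem hC'))
    · intro C hCm j hj
      rw [List.mem_cons] at hCm
      rcases hCm with rfl | hCm
      · rw [List.mem_append] at hj
        rcases hj with hj | hj
        · exact ⟨p, e4 p (consNE_self hj), hj⟩
        · exact ⟨s, e4 s (consNE_of_mem (consNE_self hj)), hj⟩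
      · exact e5 C hCm j hj

theorem initial_split {S : ℕ → Prop} (l : List ℕ) (hl : l.Pairwise (· < ·))
    (h : ∀ i ∈ l, ∀ j ∈ l, i < j → S j → S i) :
    ∃ p s, l = p ++ s ∧ (∀ j ∈ p, S j) ∧ ∀ j ∈ s, ¬ S j := by
  induction l with
  | nil => exact ⟨[], [], rfl, by simp, by simp⟩
  | cons a t ih =>
    rw [List.pairwise_cons] at hl
    by_cases ha : S a
    · obtain ⟨p, s, h1, h2, h3⟩ := ih hl.2 (fun i hi j hj => h i (by simp [hi]) j (by simp [hj]))
      refine ⟨a :: p, s, by simp [h1], ?_, h3⟩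
      intro j hj
      rw [List.mem_cons] at hj
      rcases hj with rfl | hj
      · exact ha
      · exact h2 j hj
    · refine ⟨[], a :: t, rfl, by simp, ?_⟩
      intro j hj hSj
      rw [List.mem_cons] at hj
      rcases hj with rfl | hj
      · exact ha hSj
      · exact ha (h a (by simp) j (by simp [hj]) (hl.1 j hj) hSj)

/-- invariants of the classes -/
structure ClsOK (N nd : ℕ) (rows : List (ℕ × ℕ)) (cls : List (List ℕ)) : Prop where
  sorted : ∀ C ∈ cls, C.Pairwise (· < ·)
  lt : ∀ C ∈ cls, ∀ i ∈ C, i < N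
  deg : ∀ C ∈ cls, ∀ i ∈ C, ∀ j ∈ C, (i < nd ↔ j < nd)
  new : ∀ C ∈ cls, ∀ i ∈ C, ∀ p ∈ rows, p.1 ≠ i
  bits : ∀ C ∈ cls, ∀ i ∈ C, ∀ j ∈ C, ∀ p ∈ rows, p.2.testBit i = p.2.testBit j
  cover : ∀ j < N, (∃ r, (j, r) ∈ rows) ∨ ∃ C ∈ cls, j ∈ C

noncomputable def phi {N : ℕ} (v : Fin N) (G : SimpleGraph (Fin N)) : ℕ := ∑ i, if G.Adj v i then i.1 else 0

/-- exchange two labels -/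
def swapG {N : ℕ} (i j : Fin N) (G : SimpleGraph (Fin N)) : SimpleGraph (Fin N) :=
  G.comap (Equiv.swap i j)

theorem swapG_phi {N : ℕ} {v i j : Fin N} {G : SimpleGraph (Fin N)} (hi : i ≠ v) (hj : j ≠ v)
    (hij : i < j) (h1 : G.Adj v j) (h2 : ¬ G.Adj v i) : phi v (swapG i j G) < phi v G := by
  have e : phi v (swapG i j G) = ∑ x, if G.Adj v x then (Equiv.swap i j x).1 else 0 := by
    unfold phi
    rw [← Equiv.sum_comp (Equiv.swap i j)]
    apply Finset.sum_congr rfl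
    intro x _
    have : (swapG i j G).Adj v (Equiv.swap i j x) ↔ G.Adj v x := by
      simp [swapG, Equiv.swap_apply_of_ne_of_ne hi.symm hj.symm]
    simp only [this]
  rw [e]
  apply Finset.sum_lt_sum
  · intro x _
    split_ifs with hx
    · by_cases hxj : x = j
      · subst hxj
        rw [Equiv.swap_apply_right]
        exact hij.le
      · have hxi : x ≠ i := by
          rintro rfl
          exact h2 hx
        rw [Equiv.swap_apply_of_ne_of_ne hxi hxj]
    · exact le_rfl
  · refine ⟨j, Finset.mem_univ _, ?_⟩
    rw [if_pos h1, if_pos h1, Equiv.swap_apply_right]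
    exact hij

theorem swapG_deg {N nd : ℕ} {i j : Fin N} {G : SimpleGraph (Fin N)} (hG : DegOK nd G)
    (hij : i.1 < nd ↔ j.1 < nd) : DegOK nd (swapG i j G) := by
  intro v
  have e : (swapG i j G).degree v = G.degree (Equiv.swap i j v) := by
    have : G.neighborFinset (Equiv.swap i j v) =
        ((swapG i j G).neighborFinset v).map (Equiv.swap i j).toEmbedding := by
      ext x
      simp only [Finset.mem_map_equiv, SimpleGraph.mem_neighborFinset]
      simp [swapG]
    rw [← SimpleGraph.card_neighborFinset_eq_degree, ← SimpleGraph.card_neighborFinset_eq_degree,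
      this, Finset.card_map]
  rw [e, hG]
  have : (Equiv.swap i j v).1 < nd ↔ v.1 < nd := by
    by_cases h1 : v = i
    · subst h1
      rw [Equiv.swap_apply_left]
      exact hij.symm
    · by_cases h2 : v = j
      · subst h2
        rw [Equiv.swap_apply_right]
        exact hij
      · rw [Equiv.swap_apply_of_ne_of_ne h1 h2]
  simp only [this]

theorem swapG_row {N : ℕ} {i j : Fin N} {G : SimpleGraph (Fin N)} {p : ℕ × ℕ} (hp : RowOK G p)
    (hi : p.1 ≠ i.1) (hj : p.1 ≠ j.1) (hb : p.2.testBit i.1 = p.2.testBit j.1) :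
    RowOK (swapG i j G) p := by
  obtain ⟨h1, h2⟩ := hp
  refine ⟨h1, ?_⟩
  intro x
  have ei : (⟨p.1, h1⟩ : Fin N) ≠ i := fun h => hi (congrArg Fin.val h)
  have ej : (⟨p.1, h1⟩ : Fin N) ≠ j := fun h => hj (congrArg Fin.val h)
  by_cases hx : x < N
  · have e1 : nadj (swapG i j G) p.1 x ↔ nadj G p.1 (Equiv.swap i j ⟨x, hx⟩).1 := by
      refine (nadj_fin (swapG i j G) ⟨p.1, h1⟩ ⟨x, hx⟩).trans
        (Iff.trans ?_ (nadj_fin G ⟨p.1, h1⟩ (Equiv.swap i j ⟨x, hx⟩)).symm)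
      simp [swapG, Equiv.swap_apply_of_ne_of_ne ei ej]
    rw [e1, ← h2]
    by_cases h1 : (⟨x, hx⟩ : Fin N) = i
    · rw [h1, Equiv.swap_apply_left, ← hb, ← h1]
    · by_cases h2 : (⟨x, hx⟩ : Fin N) = j
      · rw [h2, Equiv.swap_apply_right, hb, ← h2]
      · rw [Equiv.swap_apply_of_ne_of_ne h1 h2]
  · constructor
    · intro h
      exact absurd ((h2 x).1 h).2.1 hx
    · intro h
      exact absurd h.2.1 hx

theorem search_sound {N nd : ℕ} (hN : N ≤ 11) (hnd : nd ≤ N) (f : ℕ) :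
    ∀ (G : SimpleGraph (Fin N)) (rows : List (ℕ × ℕ)) (tris : List ℕ) (cls : List (List ℕ)),
      DegOK nd G → (∀ p ∈ rows, RowOK G p) → (∀ t ∈ tris, TriOK rows t) → ClsOK N nd rows cls →
      search N nd f rows tris cls = true → TA G := by
  induction f with
  | zero =>
    intro G rows tris cls _ _ _ _ h
    simp [search] at h
  | succ f ih =>
    intro G rows tris cls hG hrows htris hcls h
    simp only [search, Bool.or_eq_true] at h
    rcases h with h | h
    · exact good_sound hN hnd hG (fun t ht => (htris t ht).isTri hrows) hrows h
    · obtain ⟨v, hv⟩ := pick_sound nd rows cls 0 100000 (fun v => Nat.blt v N &&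
        force (cond (Nat.blt v nd) 4 3) fun d =>
        known v rows 0 fun r0 =>
        filt v cls [] fun cls' =>
        branch d (fun r ncls =>
          (!(Nat.beq (pop r) d)) ||
          addTris N v r rows tris fun tris' => search N nd f ((v, r) :: rows) tris' ncls) cls' r0 [])
      rw [hv] at h
      simp only [force_eq, Bool.and_eq_true] at h
      obtain ⟨hvN, h⟩ := h
      have hvN : v < N := Nat.le_of_ble_eq_true hvN
      -- a best relabelling
      let P : Set (SimpleGraph (Fin N)) := {G' | (TA G' → TA G) ∧ DegOK nd G' ∧ ∀ p ∈ rows, RowOK G' p}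
      have hPne : P.Nonempty := ⟨G, fun h => h, hG, hrows⟩
      obtain ⟨G', ⟨hTA, hG', hrows'⟩, hmin⟩ := P.toFinite.exists_minimalFor (phi ⟨v, hvN⟩) P hPne
      apply hTA
      have hmono : ∀ C ∈ cls, ∀ i ∈ C, ∀ j ∈ C, i ≠ v → j ≠ v → i < j → nadj G' v j → nadj G' v i := by
        intro C hC i hi j hj hiv hjv hij hadj
        by_contra hn
        have hiN := hcls.lt C hC i hi
        have hjN := hcls.lt C hC j hj
        have hlt : phi ⟨v, hvN⟩ (swapG ⟨i, hiN⟩ ⟨j, hjN⟩ G') < phi ⟨v, hvN⟩ G' := by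
          apply swapG_phi
          · exact fun h => hiv (congrArg Fin.val h)
          · exact fun h => hjv (congrArg Fin.val h)
          · exact hij
          · exact hadj.2.2
          · exact fun h => hn ⟨hvN, hiN, h⟩
        have hmem : swapG ⟨i, hiN⟩ ⟨j, hjN⟩ G' ∈ P := by
          refine ⟨?_, swapG_deg hG' (hcls.deg C hC i hi j hj), ?_⟩
          · intro h
            apply hTA
            refine TA.iso (Equiv.swap ⟨i, hiN⟩ ⟨j, hjN⟩) ?_ h
            intro x y
            simp [swapG]
          · intro p hp
            exact swapG_row (hrows' p hp) (hcls.new C hC i hi p hp) (hcls.new C hC j hj p hp)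
              (hcls.bits C hC i hi j hj p hp)
        have := hmin hmem hlt.le
        omega
      obtain ⟨r0, e1, e2⟩ := known_sound v rows 0 (fun r0 =>
        filt v cls [] fun cls' =>
        branch (cond (Nat.blt v nd) 4 3) (fun r ncls =>
          (!(Nat.beq (pop r) (cond (Nat.blt v nd) 4 3))) ||
          addTris N v r rows tris fun tris' => search N nd f ((v, r) :: rows) tris' ncls) cls' r0 [])
      rw [e1] at h
      obtain ⟨cls', e3, e4⟩ := filt_sound v cls [] (fun cls' =>
        branch (cond (Nat.blt v nd) 4 3) (fun r ncls =>
          (!(Nat.beq (pop r) (cond (Nat.blt v nd) 4 3))) ||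
          addTris N v r rows tris fun tris' => search N nd f ((v, r) :: rows) tris' ncls) cls' r0 [])
      rw [e3] at h
      have hd : G'.degree ⟨v, hvN⟩ = cond (Nat.blt v nd) 4 3 := by
        rw [hG']
        cases hb : Nat.blt v nd with
        | true =>
          have : v < nd := Nat.le_of_ble_eq_true hb
          simp [this]
        | false =>
          have : ¬ v < nd := by
            intro hlt
            have : Nat.blt v nd = true := Nat.ble_eq_true_of_le hlt
            rw [hb] at this
            exact absurd this (by decide)
          simp [this]
      rw [← hd] at h
      have hsub : ∀ m : ℕ, (∀ j, m.testBit j = true → nadj G' v j) → pop m ≤ G'.degree ⟨v, hvN⟩ := by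
        intro m hm
        rw [pop_eq hN m fun j hj => (hm j hj).2.1, ← SimpleGraph.card_neighborFinset_eq_degree]
        apply Finset.card_le_card
        intro x hx
        simp only [Finset.mem_filter, Finset.mem_univ, true_and] at hx
        rw [SimpleGraph.mem_neighborFinset]
        exact (hm x hx).2.2
      have hmem' : ∀ C ∈ cls', ∃ C0 ∈ cls, C = C0.filter fun i => !(Nat.beq i v) := by
        intro C hC
        have := (e4 C).1 hC
        simpa using this
      have hfil : ∀ (C0 : List ℕ) (i : ℕ), i ∈ (C0.filter fun i => !(Nat.beq i v)) ↔ i ∈ C0 ∧ i ≠ v := by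
        intro C0 i
        rw [List.mem_filter]
        have := @beq_iff i v
        cases hb : Nat.beq i v <;> simp_all
      have hr0 : ∀ j, r0.testBit j = true → nadj G' v j := by
        intro j hj
        have := (e2 j).1 hj
        rw [Nat.zero_testBit] at this
        rcases this with h | ⟨ru, h1, h2⟩
        · exact absurd h (by decide)
        · exact (((hrows' _ h1).2 v).1 h2).symm
      obtain ⟨r, ncls, h1, h2, h3, h4, h5⟩ := branch_sound (S := nadj G' v) hsub cls' (by
        intro C hC
        obtain ⟨C0, hC0, rfl⟩ := hmem' C hC
        apply initial_split
        · exact (hcls.sorted C0 hC0).filter _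
        · intro i hi j hj
          rw [hfil] at hi hj
          exact hmono C0 hC0 i hi.1 j hj.1 hi.2 hj.2) r0 hr0 [] h
      have hrow : ∀ j, r.testBit j = true ↔ nadj G' v j := by
        intro j
        rw [h2]
        constructor
        · rintro (h | ⟨C, _, _, h⟩)
          · exact hr0 j h
          · exact h
        · intro hadj
          have hjN : j < N := hadj.2.1
          rcases hcls.cover j hjN with ⟨rj, hj⟩ | ⟨C, hC, hj⟩
          · left
            rw [e2]
            exact Or.inr ⟨rj, hj, ((hrows' _ hj).2 v).2 hadj.symm⟩
          · right
            refine ⟨C.filter fun i => !(Nat.beq i v), (e4 _).2 (Or.inr ⟨C, hC, rfl⟩), ?_, hadj⟩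
            rw [hfil]
            refine ⟨hj, ?_⟩
            rintro rfl
            exact hadj.2.2.ne rfl
      have hpop : pop r = G'.degree ⟨v, hvN⟩ := by
        rw [pop_eq hN r fun j hj => ((hrow j).1 hj).2.1, ← SimpleGraph.card_neighborFinset_eq_degree]
        congr 1
        ext x
        simp only [Finset.mem_filter, Finset.mem_univ, true_and, SimpleGraph.mem_neighborFinset, hrow]
        exact nadj_fin G' ⟨v, hvN⟩ x
      rw [hpop, beq_iff.2 rfl, Bool.not_true, Bool.false_or] at h1
      obtain ⟨tris', e5, e6⟩ := addTris_sound N v r rows tris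
        (fun tris' => search N nd f ((v, r) :: rows) tris' ncls)
      rw [e5] at h1
      refine ih G' ((v, r) :: rows) tris' ncls hG' ?_ ?_ ?_ h1
      · intro p hp
        rw [List.mem_cons] at hp
        rcases hp with rfl | hp
        · exact ⟨hvN, hrow⟩
        · exact hrows' p hp
      · intro t ht
        rcases e6 t ht with ht | ⟨u, ru, i, q1, q2, q3, q4, rfl⟩
        · obtain ⟨u, ru, w, rw', n, q1, q2, q3⟩ := htris t ht
          exact ⟨u, ru, w, rw', n, by simp [q1], by simp [q2], q3⟩
        · exact ⟨v, r, u, ru, i, by simp, by simp [q1], q2, q3, q4, rfl⟩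
      · -- new classes
        have hsrc : ∀ C ∈ ncls, ∃ C0 ∈ cls, C.Sublist C0 ∧ (∀ i ∈ C, i ≠ v) ∧
            ∀ i ∈ C, ∀ j ∈ C, (nadj G' v i ↔ nadj G' v j) := by
          intro C hC
          rcases h3 C hC with h | ⟨C1, hC1, hs, hb⟩
          · simp at h
          · obtain ⟨C0, hC0, rfl⟩ := hmem' C1 hC1
            refine ⟨C0, hC0, hs.trans List.filter_sublist, ?_, hb⟩
            intro i hi
            exact ((hfil C0 i).1 (hs.subset hi)).2
        refine ⟨?_, ?_, ?_, ?_, ?_, ?_⟩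
        · intro C hC
          obtain ⟨C0, hC0, hs, _⟩ := hsrc C hC
          exact (hcls.sorted C0 hC0).sublist hs
        · intro C hC i hi
          obtain ⟨C0, hC0, hs, _⟩ := hsrc C hC
          exact hcls.lt C0 hC0 i (hs.subset hi)
        · intro C hC i hi j hj
          obtain ⟨C0, hC0, hs, _⟩ := hsrc C hC
          exact hcls.deg C0 hC0 i (hs.subset hi) j (hs.subset hj)
        · intro C hC i hi p hp
          obtain ⟨C0, hC0, hs, hne, _⟩ := hsrc C hC
          rw [List.mem_cons] at hp
          rcases hp with rfl | hp
          · exact (hne i hi).symm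
          · exact hcls.new C0 hC0 i (hs.subset hi) p hp
        · intro C hC i hi j hj p hp
          obtain ⟨C0, hC0, hs, hne, hb⟩ := hsrc C hC
          rw [List.mem_cons] at hp
          rcases hp with rfl | hp
          · have := hb i hi j hj
            rw [← hrow, ← hrow] at this
            exact Bool.eq_iff_iff.2 this
          · exact hcls.bits C0 hC0 i (hs.subset hi) j (hs.subset hj) p hp
        · intro j hj
          by_cases hjv : j = v
          · subst hjv
            exact Or.inl ⟨r, by simp⟩
          · rcases hcls.cover j hj with ⟨rj, hj⟩ | ⟨C, hC, hj⟩
            · exact Or.inl ⟨rj, by simp [hj]⟩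
            · right
              exact h5 _ ((e4 _).2 (Or.inr ⟨C, hC, rfl⟩)) j ((hfil C j).2 ⟨hj, hjv⟩)

theorem run_sound {N nd : ℕ} (hN : N ≤ 11) (hnd : nd ≤ N) (h : run N nd = true)
    (G : SimpleGraph (Fin N)) (hG : DegOK nd G) : TA G := by
  refine search_sound hN hnd _ G [] [] _ hG (by simp) (by simp) ?_ h
  have hmem : ∀ C ∈ consNE (List.range nd) (consNE ((List.range N).filter fun i => Nat.ble nd i) []),
      C = List.range nd ∨ C = (List.range N).filter fun i => Nat.ble nd i := by
    intro C hC
    rcases mem_consNE hC with h | h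
    · exact Or.inl h
    · rcases mem_consNE h with h | h
      · exact Or.inr h
      · simp at h
  have hfil : ∀ i, i ∈ ((List.range N).filter fun i => Nat.ble nd i) ↔ i < N ∧ nd ≤ i := by
    intro i
    rw [List.mem_filter, List.mem_range, Nat.ble_eq]
  refine ⟨?_, ?_, ?_, by simp, by simp, ?_⟩
  · intro C hC
    rcases hmem C hC with rfl | rfl
    · exact List.pairwise_lt_range
    · exact List.pairwise_lt_range.filter _
  · intro C hC i hi
    rcases hmem C hC with rfl | rfl
    · rw [List.mem_range] at hi
      omega
    · exact ((hfil i).1 hi).1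
  · intro C hC i hi j hj
    rcases hmem C hC with rfl | rfl
    · rw [List.mem_range] at hi hj
      omega
    · have := (hfil i).1 hi
      have := (hfil j).1 hj
      omega
  · intro j hj
    right
    by_cases hjn : j < nd
    · have : j ∈ List.range nd := List.mem_range.2 hjn
      exact ⟨_, consNE_self this, this⟩
    · have : j ∈ ((List.range N).filter fun i => Nat.ble nd i) := (hfil j).2 ⟨hj, by omega⟩
      exact ⟨_, consNE_of_mem (consNE_self this), this⟩

end TApx

namespace TApx

open Classical

universe u

variable {V V' W : Type*}

theorem top5_three : ∀ w : Fin 5, ∃ a b c, (⊤ : SimpleGraph (Fin 5)).Adj w a ∧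
    (⊤ : SimpleGraph (Fin 5)).Adj w b ∧ (⊤ : SimpleGraph (Fin 5)).Adj w c ∧
    a ≠ b ∧ a ≠ c ∧ b ≠ c := by
  intro w
  simp only [SimpleGraph.top_adj]
  fin_cases w
  · exact ⟨1, 2, 3, by simp, by simp, by simp, by simp, by simp, by simp⟩
  · exact ⟨0, 2, 3, by simp, by simp, by simp, by simp, by simp, by simp⟩
  · exact ⟨1, 0, 3, by simp, by simp, by simp, by simp, by simp, by simp⟩
  · exact ⟨1, 2, 0, by simp, by simp, by simp, by simp, by simp, by simp⟩
  · exact ⟨1, 2, 3, by simp, by simp, by simp, by simp, by simp, by simp⟩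

theorem k33_three : ∀ w : Fin 3 ⊕ Fin 3, ∃ a b c,
    (completeBipartiteGraph (Fin 3) (Fin 3)).Adj w a ∧
    (completeBipartiteGraph (Fin 3) (Fin 3)).Adj w b ∧
    (completeBipartiteGraph (Fin 3) (Fin 3)).Adj w c ∧ a ≠ b ∧ a ≠ c ∧ b ≠ c := by
  rintro (w | w)
  · exact ⟨Sum.inr 0, Sum.inr 1, Sum.inr 2, by simp, by simp, by simp, by simp, by simp, by simp⟩
  · exact ⟨Sum.inl 0, Sum.inl 1, Sum.inl 2, by simp, by simp, by simp, by simp, by simp, by simp⟩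

/-- Suppress the vertex `v`: remove it and join its neighbours. -/
def sup (G : SimpleGraph V) (v : V) : SimpleGraph {w : V // w ≠ v} where
  Adj x y := x ≠ y ∧ (G.Adj x.1 y.1 ∨ (G.Adj v x.1 ∧ G.Adj v y.1))
  symm := ⟨fun _ _ h => ⟨h.1.symm, h.2.imp (fun h => h.symm) (fun h => ⟨h.2, h.1⟩)⟩⟩
  loopless := ⟨fun _ h => h.1 rfl⟩

theorem two_nbrs [Fintype V] (G : SimpleGraph V) (v : V) (h : G.degree v ≤ 2) :
    ∃ p q, ∀ x, G.Adj v x → x = p ∨ x = q := by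
  rw [← SimpleGraph.card_neighborFinset_eq_degree] at h
  have key : ∀ x, G.Adj v x ↔ x ∈ G.neighborFinset v := fun x =>
    (SimpleGraph.mem_neighborFinset _ _ _).symm
  have hc : (G.neighborFinset v).card = 0 ∨ (G.neighborFinset v).card = 1 ∨
      (G.neighborFinset v).card = 2 := by omega
  rcases hc with hc | hc | hc
  · rw [Finset.card_eq_zero] at hc
    refine ⟨v, v, fun x hx => ?_⟩
    rw [key, hc] at hx
    simp at hx
  · obtain ⟨p, hp⟩ := Finset.card_eq_one.1 hc
    refine ⟨p, p, fun x hx => ?_⟩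
    rw [key, hp] at hx
    simpa using hx
  · obtain ⟨p, q, _, hp⟩ := Finset.card_eq_two.1 hc
    refine ⟨p, q, fun x hx => ?_⟩
    rw [key, hp] at hx
    simpa using hx

theorem TA_sup [Fintype V] (G : SimpleGraph V) (v : V) (h : G.degree v ≤ 2)
    (hT : TA (sup G v)) : TA G := by
  obtain ⟨p, q, hpq⟩ := two_nbrs G v h
  obtain ⟨a, b, hT1, hT2⟩ := hT
  have hv : ∀ x, (del G a.1 b.1).Adj v x → x = p ∨ x = q := fun x hx => hpq x hx.1
  have h1 : ∀ x y : {w : V // w ≠ v}, (del G a.1 b.1).Adj x.1 y.1 → (del (sup G v) a b).Adj x y := by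
    rintro x y ⟨h, h1, h2, h3, h4⟩
    refine ⟨⟨?_, Or.inl h⟩, ?_, ?_, ?_, ?_⟩
    · rintro rfl
      exact h.ne rfl
    all_goals
      rintro rfl
      contradiction
  have h2 : ∀ x y : {w : V // w ≠ v}, x ≠ y → (del G a.1 b.1).Adj v x.1 →
      (del G a.1 b.1).Adj v y.1 → (del (sup G v) a b).Adj x y := by
    rintro x y hne ⟨h, _, _, h1, h2⟩ ⟨h', _, _, h3, h4⟩
    refine ⟨⟨hne, Or.inr ⟨h, h'⟩⟩, ?_, ?_, ?_, ?_⟩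
    all_goals
      rintro rfl
      contradiction
  exact ⟨a.1, b.1, fun hm => hT1 (minor_suppress v p q top5_three hv h1 h2 hm),
    fun hm => hT2 (minor_suppress v p q k33_three hv h1 h2 hm)⟩

theorem sup_map [Fintype V] (G : SimpleGraph V) (v : V) (w : {w : V // w ≠ v}) (x : V) :
    x ∈ ((sup G v).neighborFinset w).map (Function.Embedding.subtype _) ↔
      x ≠ v ∧ x ≠ w.1 ∧ (G.Adj w.1 x ∨ (G.Adj v w.1 ∧ G.Adj v x)) := by
  rw [Finset.mem_map]
  constructor
  · rintro ⟨y, hy, rfl⟩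
    rw [SimpleGraph.mem_neighborFinset] at hy
    refine ⟨y.2, ?_, hy.2⟩
    intro h
    exact hy.1 (Subtype.ext h.symm)
  · rintro ⟨h1, h2, h3⟩
    refine ⟨⟨x, h1⟩, ?_, rfl⟩
    rw [SimpleGraph.mem_neighborFinset]
    refine ⟨?_, h3⟩
    rintro rfl
    exact h2 rfl

theorem sup_deg_le [Fintype V] (G : SimpleGraph V) (v : V) (h : G.degree v ≤ 2)
    (w : {w : V // w ≠ v}) : (sup G v).degree w ≤ G.degree w.1 := by
  rw [← SimpleGraph.card_neighborFinset_eq_degree,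
    ← Finset.card_map (Function.Embedding.subtype _)]
  by_cases hw : G.Adj v w.1
  · have hs : ((sup G v).neighborFinset w).map (Function.Embedding.subtype _) ⊆
        (G.neighborFinset w.1).erase v ∪ (G.neighborFinset v).erase w.1 := by
      intro x hx
      rw [sup_map] at hx
      simp only [Finset.mem_union, Finset.mem_erase, SimpleGraph.mem_neighborFinset]
      tauto
    have h1 := Finset.card_le_card hs
    have h2 := Finset.card_union_le ((G.neighborFinset w.1).erase v) ((G.neighborFinset v).erase w.1)
    have h3 := Finset.card_erase_add_one ((SimpleGraph.mem_neighborFinset _ _ _).2 hw.symm)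
    have h4 := Finset.card_erase_add_one ((SimpleGraph.mem_neighborFinset _ _ _).2 hw)
    rw [SimpleGraph.card_neighborFinset_eq_degree] at h3 h4
    omega
  · rw [← SimpleGraph.card_neighborFinset_eq_degree]
    apply Finset.card_le_card
    intro x hx
    rw [sup_map] at hx
    rw [SimpleGraph.mem_neighborFinset]
    tauto

theorem sup_deg_ge [Fintype V] (G : SimpleGraph V) (v : V)
    (w : {w : V // w ≠ v}) :
    G.degree w.1 ≤ (sup G v).degree w + (if G.Adj v w.1 then 1 else 0) := by
  rw [← SimpleGraph.card_neighborFinset_eq_degree, ← SimpleGraph.card_neighborFinset_eq_degree,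
    ← Finset.card_map (Function.Embedding.subtype _)]
  split_ifs with hw
  · have hs : G.neighborFinset w.1 ⊆
        insert v (((sup G v).neighborFinset w).map (Function.Embedding.subtype _)) := by
      intro x hx
      rw [SimpleGraph.mem_neighborFinset] at hx
      rw [Finset.mem_insert, sup_map]
      by_cases hxv : x = v
      · exact Or.inl hxv
      · exact Or.inr ⟨hxv, hx.ne', Or.inl hx⟩
    exact (Finset.card_le_card hs).trans (Finset.card_insert_le _ _)
  · apply Finset.card_le_card
    intro x hx
    rw [SimpleGraph.mem_neighborFinset] at hx
    rw [sup_map]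
    refine ⟨?_, hx.ne', Or.inl hx⟩
    rintro rfl
    exact hw hx.symm

theorem sup_sum [Fintype V] (G : SimpleGraph V) (v : V) (h : G.degree v ≤ 2) :
    ∑ w, (4 - (sup G v).degree w) ≤ ∑ w, (4 - G.degree w) := by
  have h1 := Fintype.sum_eq_add_sum_subtype_ne (fun w => 4 - G.degree w) v
  have h2 := Fintype.sum_eq_add_sum_subtype_ne (fun w => if G.Adj v w then 1 else 0) v
  have h3 : ∑ w, (if G.Adj v w then 1 else 0) = G.degree v := by
    rw [← Finset.card_filter, ← SimpleGraph.card_neighborFinset_eq_degree]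
    congr 1
    ext x
    simp
  have h4 : ∑ w, (4 - (sup G v).degree w) ≤
      ∑ w : {w : V // w ≠ v}, ((4 - G.degree w.1) + (if G.Adj v w.1 then 1 else 0)) := by
    apply Finset.sum_le_sum
    intro w _
    have := sup_deg_ge G v w
    omega
  rw [Finset.sum_add_distrib] at h4
  rw [h3] at h2
  simp only [SimpleGraph.irrefl, if_false] at h2
  omega

theorem small_case [Fintype V] (G : SimpleGraph V) (hc : Fintype.card V = 6) : TA G := by
  obtain ⟨a, b, hab⟩ := Fintype.exists_pair_of_one_lt_card (α := V) (by omega)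
  refine ⟨a, b, leaf (del G a b) a b hab (del_degree_zero G a b a (Or.inl rfl))
    (del_degree_zero G a b b (Or.inr rfl)) ?_ (Or.inr (Or.inr (Or.inr (by omega))))⟩
  have : ∀ v ∈ (Finset.univ : Finset V), (del G a b).degree v - 2 ≤ 1 := by
    intro v _
    by_cases hv : v = a ∨ v = b
    · rw [del_degree_zero G a b v hv]
      omega
    · push Not at hv
      have hs : (del G a b).neighborFinset v ⊆ Finset.univ \ {a, b, v} := by
        intro x hx
        rw [SimpleGraph.mem_neighborFinset] at hx
        simp only [Finset.mem_sdiff, Finset.mem_univ, true_and, Finset.mem_insert,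
          Finset.mem_singleton, not_or]
        exact ⟨hx.2.2.2.1, hx.2.2.2.2, hx.1.ne'⟩
      have h1 := Finset.card_le_card hs
      rw [Finset.card_sdiff_of_subset (Finset.subset_univ _), Finset.card_univ, hc,
        Finset.card_eq_three.2 ⟨a, b, v, hab, hv.1.symm, hv.2.symm, rfl⟩,
        SimpleGraph.card_neighborFinset_eq_degree] at h1
      omega
  have h2 := Finset.sum_le_sum this
  rw [Finset.sum_const, Finset.card_univ, hc] at h2
  unfold excess
  simp only [smul_eq_mul] at h2
  omega

theorem run_11 : run 11 7 = true := by decide +kernel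

theorem run_small : (run 10 10 && run 10 8 && run 10 6 && run 9 9 && run 9 7 && run 9 5 &&
    run 8 8 && run 8 6 && run 8 4 && run 7 7 && run 7 5 && run 7 3) = true := by decide +kernel

theorem reg_case [Fintype V] (G : SimpleGraph V) (n nd : ℕ) (hn : n ≤ 11) (hc : Fintype.card V = n)
    (hr : run n nd = true) (hnd : nd ≤ n)
    (hd : ∀ v, G.degree v = 4 ∨ G.degree v = 3)
    (h4 : (Finset.univ.filter fun v => G.degree v = 4).card = nd) : TA G := by
  have c1 : Fintype.card {v : V // G.degree v = 4} = Fintype.card {i : Fin n // i.1 < nd} := by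
    rw [Fintype.card_subtype, h4, Fintype.card_subtype, Fin.card_filter_val_lt]
    omega
  have c2 : Fintype.card {v : V // ¬ G.degree v = 4} = Fintype.card {i : Fin n // ¬ i.1 < nd} := by
    have e1 := Fintype.card_subtype_compl (fun v : V => G.degree v = 4)
    have e2 := Fintype.card_subtype_compl (fun i : Fin n => i.1 < nd)
    rw [e1, e2, c1, hc, Fintype.card_fin]
  let e : V ≃ Fin n := (Equiv.sumCompl (fun v : V => G.degree v = 4)).symm.trans
    ((Equiv.sumCongr (Fintype.equivOfCardEq c1) (Fintype.equivOfCardEq c2)).trans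
      (Equiv.sumCompl (fun i : Fin n => i.1 < nd)))
  have he : ∀ v, (e v).1 < nd ↔ G.degree v = 4 := by
    intro v
    by_cases hv : G.degree v = 4
    · have : e v = (Fintype.equivOfCardEq c1 ⟨v, hv⟩).1 := by
        simp only [e, Equiv.trans_apply]
        rw [Equiv.sumCompl_symm_apply_of_pos (p := fun v : V => G.degree v = 4) hv]
        simp
      rw [this]
      exact ⟨fun _ => hv, fun _ => (Fintype.equivOfCardEq c1 ⟨v, hv⟩).2⟩
    · have : e v = (Fintype.equivOfCardEq c2 ⟨v, hv⟩).1 := by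
        simp only [e, Equiv.trans_apply]
        rw [Equiv.sumCompl_symm_apply_of_neg (p := fun v : V => G.degree v = 4) hv]
        simp
      rw [this]
      exact ⟨fun h => absurd h (Fintype.equivOfCardEq c2 ⟨v, hv⟩).2, fun h => absurd h hv⟩
  have hG : DegOK nd (G.comap e.symm) := by
    intro i
    have h1 : (G.comap e.symm).degree i = G.degree (e.symm i) := by
      have : G.neighborFinset (e.symm i) =
          ((G.comap e.symm).neighborFinset i).map e.symm.toEmbedding := by
        ext x
        simp only [Finset.mem_map_equiv, SimpleGraph.mem_neighborFinset]
        simp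
      rw [← SimpleGraph.card_neighborFinset_eq_degree, ← SimpleGraph.card_neighborFinset_eq_degree,
        this, Finset.card_map]
    have h2 := he (e.symm i)
    rw [Equiv.apply_symm_apply] at h2
    refine Eq.trans (b := G.degree (e.symm i)) (by convert h1) ?_
    split_ifs with h
    · exact h2.1 h
    · exact (hd _).resolve_left fun h' => h (h2.2 h')
  exact TA.iso e (fun x y => by simp) (run_sound hn hnd hr _ hG)

theorem main_ind : ∀ (n : ℕ) (V : Type u) [Fintype V] (G : SimpleGraph V), Fintype.card V = n →
    6 ≤ n → (∀ v, G.degree v ≤ 4) →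
    ((n = 11 ∧ ∑ v, (4 - G.degree v) = 4) ∨ (n ≤ 10 ∧ ∑ v, (4 - G.degree v) ≤ 4)) → TA G := by
  intro n
  induction n with
  | zero =>
    intro V _ G _ h
    omega
  | succ n ih =>
    intro V _ G hc hn hd hs
    by_cases h6 : n + 1 = 6
    · exact small_case G (by omega)
    by_cases h2 : ∃ v, G.degree v ≤ 2
    · obtain ⟨v, hv⟩ := h2
      apply TA_sup G v hv
      have h1 := sup_sum G v hv
      have hcard : Fintype.card {w : V // w ≠ v} = n := by
        have := Fintype.card_subtype_compl (fun w : V => w = v)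
        rw [Fintype.card_subtype_eq, hc] at this
        simpa using this
      exact ih {w : V // w ≠ v} (sup G v) hcard (by omega)
        (fun w => (sup_deg_le G v hv w).trans (hd _)) (Or.inr ⟨by omega, by omega⟩)
    · push Not at h2
      have hd' : ∀ v, G.degree v = 4 ∨ G.degree v = 3 := by
        intro v
        have := hd v
        have := h2 v
        omega
      have e1 : ∑ v, (4 - G.degree v) + ∑ v, G.degree v = 4 * (n + 1) := by
        rw [← Finset.sum_add_distrib, ← hc, ← Finset.card_univ, mul_comm, ← smul_eq_mul,
          ← Finset.sum_const]
        apply Finset.sum_congr rfl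
        intro v _
        have := hd v
        omega
      have e2 := G.sum_degrees_eq_twice_card_edges
      have e3 : (Finset.univ.filter fun v => G.degree v = 4).card + ∑ v, (4 - G.degree v) = n + 1 := by
        rw [Finset.card_filter, ← Finset.sum_add_distrib, ← hc, ← Finset.card_univ,
          Finset.card_eq_sum_ones]
        apply Finset.sum_congr rfl
        intro v _
        rcases hd' v with h | h <;> simp [h]
      have hrs := run_small
      simp only [Bool.and_eq_true] at hrs
      obtain ⟨⟨⟨⟨⟨⟨⟨⟨⟨⟨⟨r1, r2⟩, r3⟩, r4⟩, r5⟩, r6⟩, r7⟩, r8⟩, r9⟩, r10⟩, r11⟩, r12⟩ := hrs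
      have go := fun nd hr hnd h4 => reg_case G (n + 1) nd (by omega) hc hr hnd hd' h4
      generalize hk : ∑ v, (4 - G.degree v) = k at *
      have hk' : k = 0 ∨ k = 2 ∨ k = 4 := by omega
      have hn' : n = 6 ∨ n = 7 ∨ n = 8 ∨ n = 9 ∨ n = 10 := by omega
      rcases hn' with rfl | rfl | rfl | rfl | rfl <;> rcases hk' with rfl | rfl | rfl
      · exact go 7 r10 (by omega) (by omega)
      · exact go 5 r11 (by omega) (by omega)
      · exact go 3 r12 (by omega) (by omega)
      · exact go 8 r7 (by omega) (by omega)
      · exact go 6 r8 (by omega) (by omega)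
      · exact go 4 r9 (by omega) (by omega)
      · exact go 9 r4 (by omega) (by omega)
      · exact go 7 r5 (by omega) (by omega)
      · exact go 5 r6 (by omega) (by omega)
      · exact go 10 r1 (by omega) (by omega)
      · exact go 8 r2 (by omega) (by omega)
      · exact go 6 r3 (by omega) (by omega)
      · omega
      · omega
      · exact go 7 run_11 (by omega) (by omega)

theorem TA.twoApex {G : SimpleGraph V} (h : TA G) : G.TwoApex := by
  obtain ⟨a, b, h1, h2⟩ := h
  refine ⟨{a, b}, ?_, ?_⟩
  · have := Set.ncard_insert_le a ({b} : Set V)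
    rw [Set.ncard_singleton] at this
    exact this
  · have key : ∀ x y, (G.induce ({a, b} : Set V)ᶜ).Adj x y → (del G a b).Adj x.1 y.1 := by
      intro x y hxy
      have hx := x.2
      have hy := y.2
      simp only [Set.mem_compl_iff, Set.mem_insert_iff, Set.mem_singleton_iff, not_or] at hx hy
      exact ⟨hxy, hx.1, hx.2, hy.1, hy.2⟩
    exact ⟨fun hm => h1 (minor_image Subtype.val Subtype.val_injective key hm),
      fun hm => h2 (minor_image Subtype.val Subtype.val_injective key hm)⟩

theorem final [Fintype V] (G : SimpleGraph V)
    (hV : Fintype.card V = 11) (hE : G.edgeSet.ncard = 20)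
    (hmax : ∀ v : V, (G.neighborSet v).ncard ≤ 4) : G.TwoApex := by
  have hd : ∀ v, G.degree v ≤ 4 := by
    intro v
    have := hmax v
    rw [Set.ncard_eq_toFinset_card'] at this
    exact this
  have he : G.edgeFinset.card = 20 := by
    rw [Set.ncard_eq_toFinset_card'] at hE
    rw [← hE]
    congr 1
  have e2 := G.sum_degrees_eq_twice_card_edges
  have e1 : ∑ v, (4 - G.degree v) + ∑ v, G.degree v = 4 * 11 := by
    rw [← Finset.sum_add_distrib, ← hV, ← Finset.card_univ, mul_comm, ← smul_eq_mul,
      ← Finset.sum_const]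
    apply Finset.sum_congr rfl
    intro v _
    have := hd v
    omega
  exact (main_ind 11 V G hV (by norm_num) hd (Or.inl ⟨rfl, by omega⟩)).twoApex

end TApx

/-- A graph with 11 vertices and 20 edges whose maximum degree equals 4 is 2-apex. -/
theorem stmt13 {V : Type*} [Fintype V] (G : SimpleGraph V)
    (hV : Fintype.card V = 11) (hE : G.edgeSet.ncard = 20)
    (hmax : ∀ v : V, (G.neighborSet v).ncard ≤ 4)
    (hmax4 : ∃ v : V, (G.neighborSet v).ncard = 4) :
    G.TwoApex := by
  exact TApx.final G hV hE hmax
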